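/- arXiv:2410.03485 — 3 statements merged into one kernel-verified Lean document; each statement's English description precedes it below -/
import Mathlib

section
/- Let K be a field of characteristic p with A-field structure ψ: F_q[T] → K, and let φ: F_q[T] → K{τ} be the Carlitz module, φ(T) = ψ(T) + τ. Then the image φ(F_q[T]) equals the centralizer of φ(T) in K{τ}, i.e., φ(F_q[T]) = {u ∈ K{τ} : u(ψ(T)+τ) = (ψ(T)+τ)u}. -/
/-- Multiplication in the twisted polynomial ring `K{τ}` (with `τ a = a^q τ`), where a
twisted polynomial `∑ aᵢ τ^i` is encoded by its coefficient function `ℕ →₀ K`. -/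
noncomputable def tmul {K : Type*} [Field K] (q : ℕ) (f g : ℕ →₀ K) : ℕ →₀ K :=
  f.sum fun i a => g.sum fun j b => Finsupp.single (i + j) (a * b ^ q ^ i)

/-- Powers in the twisted polynomial ring. -/
noncomputable def tpow {K : Type*} [Field K] (q : ℕ) (x : ℕ →₀ K) : ℕ → (ℕ →₀ K)
  | 0 => Finsupp.single 0 1
  | n + 1 => tmul q x (tpow q x n)

/-- The Carlitz module `φ : F_q[T] → K{τ}` determined by the `A`-field structure
`ψ` (with `e = ψ|_{F_q}` and `t = ψ(T)`): `φ(∑ aᵢ T^i) = ∑ ψ(aᵢ) (ψ(T) + τ)^i`. -/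
noncomputable def carlitz {Fq K : Type*} [Field Fq] [Field K] (q : ℕ) (e : Fq →+* K)
    (t : K) (f : Polynomial Fq) : ℕ →₀ K :=
  f.sum fun i a => e a • tpow q (Finsupp.single 0 t + Finsupp.single 1 1) i

section TwistedPolynomial

variable {K : Type*} [Field K]

lemma add_pow_expChar_pow_pow (p m n : ℕ) [ExpChar K p] (a b : K) :
    (a + b) ^ (p ^ m) ^ n = a ^ (p ^ m) ^ n + b ^ (p ^ m) ^ n := by
  simp only [← pow_mul, add_pow_expChar_pow]

lemma tmul_add_left (q : ℕ) (f g h : ℕ →₀ K) :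
    tmul q (f + g) h = tmul q f h + tmul q g h := by
  unfold tmul
  apply Finsupp.sum_add_index'
  · simp
  · intro i a b
    simp only [add_mul, Finsupp.single_add, Finsupp.sum_add]

lemma tmul_zero_left (q : ℕ) (f : ℕ →₀ K) : tmul q 0 f = 0 := by
  simp [tmul]

lemma tmul_zero_right (q : ℕ) (f : ℕ →₀ K) : tmul q f 0 = 0 := by
  simp [tmul]

lemma tmul_single {q : ℕ} (hq : q ≠ 0) (i j : ℕ) (a b : K) :
    tmul q (Finsupp.single i a) (Finsupp.single j b) =
      Finsupp.single (i + j) (a * b ^ q ^ i) := by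
  unfold tmul
  rw [Finsupp.sum_single_index (by simp), Finsupp.sum_single_index]
  simp [zero_pow (pow_ne_zero i hq)]

variable (p m : ℕ) [ExpChar K p]

lemma expChar_pow_ne_zero (K : Type*) [Field K] (p m : ℕ) [ExpChar K p] : p ^ m ≠ 0 :=
  pow_ne_zero m (expChar_pos K p).ne'

lemma tmul_add_right (f g h : ℕ →₀ K) :
    tmul (p ^ m) f (g + h) = tmul (p ^ m) f g + tmul (p ^ m) f h := by
  unfold tmul
  rw [← Finsupp.sum_add]
  refine Finsupp.sum_congr fun i _ => ?_
  apply Finsupp.sum_add_index'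
  · intro j
    simp [zero_pow (pow_ne_zero i (expChar_pow_ne_zero K p m))]
  · intro j a b
    rw [add_pow_expChar_pow_pow, mul_add, Finsupp.single_add]

/-- The twisted polynomial `t + τ`. -/
noncomputable abbrev carlitzGen (t : K) : ℕ →₀ K := Finsupp.single 0 t + Finsupp.single 1 1

lemma tmul_carlitzGen_apply_zero (t : K) (u : ℕ →₀ K) :
    tmul (p ^ m) u (carlitzGen t) 0 = u 0 * t := by
  induction u using Finsupp.induction_linear with
  | zero => simp [tmul_zero_left]
  | add f g hf hg => simp only [tmul_add_left, Finsupp.add_apply, hf, hg, add_mul]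
  | single i a =>
    rw [carlitzGen, tmul_add_right, tmul_single (expChar_pow_ne_zero K p m),
      tmul_single (expChar_pow_ne_zero K p m)]
    rcases eq_or_ne i 0 with rfl | hi
    · simp
    · simp [hi]

lemma tmul_carlitzGen_apply_succ (t : K) (u : ℕ →₀ K) (n : ℕ) :
    tmul (p ^ m) u (carlitzGen t) (n + 1) = u (n + 1) * t ^ (p ^ m) ^ (n + 1) + u n := by
  induction u using Finsupp.induction_linear with
  | zero => simp [tmul_zero_left]
  | add f g hf hg =>
    simp only [tmul_add_left, Finsupp.add_apply, hf, hg]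
    ring
  | single i a =>
    rw [carlitzGen, tmul_add_right, tmul_single (expChar_pow_ne_zero K p m),
      tmul_single (expChar_pow_ne_zero K p m)]
    rcases eq_or_ne i (n + 1) with rfl | hi
    · simp
    · simp [hi, Finsupp.single_apply]

lemma carlitzGen_tmul_apply_zero (t : K) (u : ℕ →₀ K) :
    tmul (p ^ m) (carlitzGen t) u 0 = t * u 0 := by
  induction u using Finsupp.induction_linear with
  | zero => simp [tmul_zero_right]
  | add f g hf hg => simp only [tmul_add_right, Finsupp.add_apply, hf, hg, mul_add]
  | single i a =>
    rw [carlitzGen, tmul_add_left, tmul_single (expChar_pow_ne_zero K p m),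
      tmul_single (expChar_pow_ne_zero K p m)]
    rcases eq_or_ne i 0 with rfl | hi
    · simp
    · simp [hi]

lemma carlitzGen_tmul_apply_succ (t : K) (u : ℕ →₀ K) (n : ℕ) :
    tmul (p ^ m) (carlitzGen t) u (n + 1) = t * u (n + 1) + u n ^ p ^ m := by
  induction u using Finsupp.induction_linear with
  | zero => simp [tmul_zero_right, zero_pow (expChar_pow_ne_zero K p m)]
  | add f g hf hg =>
    simp only [tmul_add_right, Finsupp.add_apply, hf, hg, add_pow_expChar_pow]
    ring
  | single i a =>
    rw [carlitzGen, tmul_add_left, tmul_single (expChar_pow_ne_zero K p m),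
      tmul_single (expChar_pow_ne_zero K p m)]
    rcases eq_or_ne i (n + 1) with rfl | hi
    · simp [zero_pow (expChar_pow_ne_zero K p m)]
    · simp [hi, Finsupp.single_apply, add_comm 1 i, ite_pow,
        zero_pow (expChar_pow_ne_zero K p m)]

/-- Commutation with `t + τ`, read off on coefficients. -/
lemma commute_carlitzGen_iff (t : K) (u : ℕ →₀ K) :
    tmul (p ^ m) u (carlitzGen t) = tmul (p ^ m) (carlitzGen t) u ↔
      ∀ n, u (n + 1) * t ^ (p ^ m) ^ (n + 1) + u n = t * u (n + 1) + u n ^ p ^ m := by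
  rw [DFunLike.ext_iff]
  constructor
  · intro h n
    rw [← tmul_carlitzGen_apply_succ, h, carlitzGen_tmul_apply_succ]
  · rintro h (_ | n)
    · rw [tmul_carlitzGen_apply_zero, carlitzGen_tmul_apply_zero, mul_comm]
    · rw [tmul_carlitzGen_apply_succ, h, carlitzGen_tmul_apply_succ]

lemma tmul_carlitzGen_assoc (t : K) (u : ℕ →₀ K) :
    tmul (p ^ m) (tmul (p ^ m) (carlitzGen t) u) (carlitzGen t) =
      tmul (p ^ m) (carlitzGen t) (tmul (p ^ m) u (carlitzGen t)) := by
  ext n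
  rcases n with _ | _ | n
  · simp only [tmul_carlitzGen_apply_zero, carlitzGen_tmul_apply_zero, mul_assoc]
  · simp only [tmul_carlitzGen_apply_zero, carlitzGen_tmul_apply_zero,
      tmul_carlitzGen_apply_succ, carlitzGen_tmul_apply_succ, mul_pow, zero_add, pow_one]
    ring
  · simp only [tmul_carlitzGen_apply_succ, carlitzGen_tmul_apply_succ, add_pow_expChar_pow,
      mul_pow, ← pow_mul _ _ (p ^ m), ← pow_succ (p ^ m)]
    ring

lemma tpow_carlitzGen_commute (t : K) (n : ℕ) :
    tmul (p ^ m) (tpow (p ^ m) (carlitzGen t) n) (carlitzGen t) =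
      tmul (p ^ m) (carlitzGen t) (tpow (p ^ m) (carlitzGen t) n) := by
  induction n with
  | zero =>
    rw [commute_carlitzGen_iff]
    rintro (_ | n)
    · simp [tpow]
    · simp [tpow, zero_pow (expChar_pow_ne_zero K p m)]
  | succ n ih => rw [tpow, tmul_carlitzGen_assoc, ih]

lemma tpow_carlitzGen_apply_of_lt (t : K) {n k : ℕ} (h : n < k) :
    tpow (p ^ m) (carlitzGen t) n k = 0 := by
  induction n generalizing k with
  | zero => simp [tpow, h.ne]
  | succ n ih =>
    obtain ⟨k, rfl⟩ := Nat.exists_eq_succ_of_ne_zero (Nat.ne_zero_of_lt h)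
    rw [tpow, Nat.succ_eq_add_one, carlitzGen_tmul_apply_succ, ih (by omega), ih (by omega),
      zero_pow (expChar_pow_ne_zero K p m), mul_zero, add_zero]

lemma tpow_carlitzGen_apply_self (t : K) (n : ℕ) :
    tpow (p ^ m) (carlitzGen t) n n = 1 := by
  induction n with
  | zero => simp [tpow]
  | succ n ih =>
    rw [tpow, carlitzGen_tmul_apply_succ, ih,
      tpow_carlitzGen_apply_of_lt p m t (by omega), mul_zero, one_pow, zero_add]

/-- The centralizer of `t + τ` is stable under addition. -/
lemma commute_carlitzGen_add (t : K) {u v : ℕ →₀ K}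
    (hu : tmul (p ^ m) u (carlitzGen t) = tmul (p ^ m) (carlitzGen t) u)
    (hv : tmul (p ^ m) v (carlitzGen t) = tmul (p ^ m) (carlitzGen t) v) :
    tmul (p ^ m) (u + v) (carlitzGen t) = tmul (p ^ m) (carlitzGen t) (u + v) := by
  rw [tmul_add_left, hu, hv, tmul_add_right]

/-- The centralizer of `t + τ` is stable under scalars fixed by Frobenius. -/
lemma commute_carlitzGen_smul (t : K) {c : K} (hc : c ^ p ^ m = c) {u : ℕ →₀ K}
    (hu : tmul (p ^ m) u (carlitzGen t) = tmul (p ^ m) (carlitzGen t) u) :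
    tmul (p ^ m) (c • u) (carlitzGen t) = tmul (p ^ m) (carlitzGen t) (c • u) := by
  rw [commute_carlitzGen_iff] at hu ⊢
  intro n
  simp only [Finsupp.smul_apply, smul_eq_mul, mul_pow, hc]
  linear_combination c * hu n

end TwistedPolynomial

section Carlitz

variable {Fq K : Type*} [Field Fq] [Field K]

lemma carlitz_add (q : ℕ) (e : Fq →+* K) (t : K) (f g : Polynomial Fq) :
    carlitz q e t (f + g) = carlitz q e t f + carlitz q e t g := by
  unfold carlitz
  exact Polynomial.sum_add_index f g _ (by simp) (by simp [add_smul])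

lemma carlitz_monomial (q : ℕ) (e : Fq →+* K) (t : K) (n : ℕ) (a : Fq) :
    carlitz q e t (Polynomial.monomial n a) = e a • tpow q (carlitzGen t) n := by
  unfold carlitz
  exact Polynomial.sum_monomial_index _ _ (by simp)

lemma carlitz_zero (q : ℕ) (e : Fq →+* K) (t : K) : carlitz q e t 0 = 0 := by
  simp [carlitz]

/-- Elements fixed by the `q`-Frobenius come from `F_q`. -/
lemma exists_map_eq_of_pow_card_eq [Fintype Fq] (e : Fq →+* K) {c : K}
    (hc : c ^ Fintype.card Fq = c) : ∃ a, e a = c := by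
  classical
  by_contra! h
  have hne : (Polynomial.X ^ Fintype.card Fq - Polynomial.X : Polynomial K) ≠ 0 :=
    FiniteField.X_pow_card_sub_X_ne_zero K Fintype.one_lt_card
  have hsub : insert c (Finset.univ.image e) ⊆
      (Polynomial.X ^ Fintype.card Fq - Polynomial.X : Polynomial K).roots.toFinset := by
    intro x hx
    rw [Multiset.mem_toFinset, Polynomial.mem_roots hne]
    rcases Finset.mem_insert.mp hx with rfl | hx
    · simp [hc]
    · obtain ⟨a, -, rfl⟩ := Finset.mem_image.mp hx
      simp [← map_pow, FiniteField.pow_card]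
  have hle := (Finset.card_le_card hsub).trans
    ((Multiset.toFinset_card_le _).trans (Polynomial.card_roots' _))
  rw [FiniteField.X_pow_card_sub_X_natDegree_eq K Fintype.one_lt_card,
    Finset.card_insert_of_notMem (by simpa using h),
    Finset.card_image_of_injective _ e.injective, Finset.card_univ] at hle
  omega

variable [Fintype Fq] (p m : ℕ) [ExpChar K p]
  (e : Fq →+* K) (t : K)

lemma map_pow_of_card_eq {q : ℕ} (h : Fintype.card Fq = q) (e : Fq →+* K) (a : Fq) :
    e a ^ q = e a := by
  rw [← map_pow, ← h, FiniteField.pow_card]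

lemma carlitz_commute (hcard : Fintype.card Fq = p ^ m) (f : Polynomial Fq) :
    tmul (p ^ m) (carlitz (p ^ m) e t f) (carlitzGen t) =
      tmul (p ^ m) (carlitzGen t) (carlitz (p ^ m) e t f) := by
  induction f using Polynomial.induction_on' with
  | add f g hf hg =>
    rw [carlitz_add]
    exact commute_carlitzGen_add p m t hf hg
  | monomial n a =>
    rw [carlitz_monomial]
    exact commute_carlitzGen_smul p m t (map_pow_of_card_eq hcard e a)
      (tpow_carlitzGen_commute p m t n)

lemma exists_carlitz_eq (hcard : Fintype.card Fq = p ^ m) (N : ℕ) (u : ℕ →₀ K)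
    (hN : ∀ k, N ≤ k → u k = 0)
    (hu : tmul (p ^ m) u (carlitzGen t) = tmul (p ^ m) (carlitzGen t) u) :
    ∃ f, carlitz (p ^ m) e t f = u := by
  induction N generalizing u with
  | zero =>
    refine ⟨0, ?_⟩
    ext k
    rw [carlitz_zero, hN k k.zero_le, Finsupp.zero_apply]
  | succ N ih =>
    have hlead := (commute_carlitzGen_iff p m t u).mp hu N
    rw [hN (N + 1) le_rfl, zero_mul, mul_zero, zero_add, zero_add] at hlead
    obtain ⟨a, ha⟩ := exists_map_eq_of_pow_card_eq e (hcard ▸ hlead.symm)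
    have hdeg : ∀ k, N ≤ k →
        (u + carlitz (p ^ m) e t (Polynomial.monomial N (-a))) k = 0 := by
      intro k hk
      rw [carlitz_monomial, Finsupp.add_apply, Finsupp.smul_apply, smul_eq_mul, map_neg, ha]
      rcases hk.eq_or_lt with rfl | hk
      · rw [tpow_carlitzGen_apply_self, mul_one, add_neg_cancel]
      · rw [tpow_carlitzGen_apply_of_lt p m t hk, mul_zero, add_zero, hN k hk]
    obtain ⟨f, hf⟩ := ih _ hdeg
      (commute_carlitzGen_add p m t hu (carlitz_commute p m e t hcard _))
    refine ⟨f + Polynomial.monomial N a, ?_⟩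
    rw [carlitz_add, hf, add_assoc, ← carlitz_add, ← map_add, neg_add_cancel, map_zero,
      carlitz_zero, add_zero]

end Carlitz

/-- The image of the Carlitz module is the centralizer of `φ(T) = ψ(T) + τ` in `K{τ}`. -/
theorem stmt2 {Fq K : Type*} [Field Fq] [Fintype Fq] [Field K]
    (p m q : ℕ) (hp : p.Prime) [CharP K p] (hq : q = p ^ m) (hm : 1 ≤ m)
    (hcard : Fintype.card Fq = q) (e : Fq →+* K) (t : K) :
    Set.range (carlitz q e t) =
      {u : ℕ →₀ K | tmul q u (Finsupp.single 0 t + Finsupp.single 1 1)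
        = tmul q (Finsupp.single 0 t + Finsupp.single 1 1) u} := by
  subst hq
  have : ExpChar K p := .prime hp
  ext u
  constructor
  · rintro ⟨f, rfl⟩
    exact carlitz_commute p m e t hcard f
  · intro hu
    refine exists_carlitz_eq p m e t hcard (u.support.sup id + 1) u (fun k hk => ?_) hu
    by_contra hne
    have := Finset.le_sup (f := id) (Finsupp.mem_support_iff.mpr hne)
    simp only [id] at this
    omega
end

section
/- Let K be a field of characteristic p with A-field structure ψ such that ψ(T) has infinite multiplicative order in K. For each k ≥ 1, define ψ_k: F_q[T] → K by ψ_k(Σa_iT^i) = Σψ(a_i)ψ(T)^{ki} and the corresponding Carlitz module φ_k(T) = ψ_k(T) + τ ∈ K{τ}. Then for k ≠ l, φ_k(F_q[T]) ∩ φ_l(F_q[T]) = F_q (identifying F_q with its image in K ⊆ K{τ}). -/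
open Polynomial

theorem tmul_add_tau {K : Type*} [Field K] (q : ℕ) (t : K) (g : ℕ →₀ K) :
    tmul q (Finsupp.single 0 t + Finsupp.single 1 1) g =
      (g.sum fun j b => Finsupp.single j (t * b)) +
        g.sum fun j b => Finsupp.single (j + 1) (b ^ q) := by
  unfold tmul
  rw [Finsupp.sum_add_index', Finsupp.sum_single_index, Finsupp.sum_single_index]
  · simp [add_comm 1]
  · simp
  · simp
  · simp
  · intro i a b
    simp [add_mul, Finsupp.sum_add]

theorem tmul_add_tau_zero {K : Type*} [Field K] (q : ℕ) (t : K) (g : ℕ →₀ K) :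
    tmul q (Finsupp.single 0 t + Finsupp.single 1 1) g 0 = t * g 0 := by
  rw [tmul_add_tau, Finsupp.add_apply, Finsupp.sum_apply, Finsupp.sum_apply]
  simp +contextual [Finsupp.single_apply, Finsupp.sum]

theorem tmul_add_tau_succ {K : Type*} [Field K] {q : ℕ} (hq : q ≠ 0) (t : K) (g : ℕ →₀ K)
    (n : ℕ) : tmul q (Finsupp.single 0 t + Finsupp.single 1 1) g (n + 1) =
      t * g (n + 1) + g n ^ q := by
  rw [tmul_add_tau, Finsupp.add_apply, Finsupp.sum_apply, Finsupp.sum_apply]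
  simp only [Finsupp.sum, Finsupp.single_apply, add_left_inj, Finset.sum_ite_eq',
    Finsupp.mem_support_iff]
  congr 1 <;> split_ifs <;> simp_all

theorem tpow_add_tau_apply_zero {K : Type*} [Field K] (q : ℕ) (t : K) (n : ℕ) :
    tpow q (Finsupp.single 0 t + Finsupp.single 1 1) n 0 = t ^ n := by
  induction n with
  | zero => simp [tpow]
  | succ n ih => rw [tpow, tmul_add_tau_zero, ih, pow_succ']

theorem tpow_add_tau_apply_of_le {K : Type*} [Field K] {q : ℕ} (hq : q ≠ 0) (t : K) {i n : ℕ}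
    (h : i ≤ n) :
    tpow q (Finsupp.single 0 t + Finsupp.single 1 1) i n = if i = n then 1 else 0 := by
  induction i generalizing n with
  | zero => simp [tpow, Finsupp.single_apply]
  | succ i ih =>
    obtain ⟨n, rfl⟩ : ∃ k, n = k + 1 := ⟨n - 1, by omega⟩
    rw [tpow, tmul_add_tau_succ hq, ih (by omega), ih (by omega), if_neg (by omega)]
    simp [ite_pow, hq]

theorem carlitz_apply_zero {Fq K : Type*} [Field Fq] [Field K] (q : ℕ) (e : Fq →+* K) (t : K)
    (f : Fq[X]) : carlitz q e t f 0 = f.eval₂ e t := by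
  simp [carlitz, Polynomial.sum_def, eval₂_eq_sum, Finsupp.finsetSum_apply,
    tpow_add_tau_apply_zero]

theorem carlitz_apply_of_natDegree_le {Fq K : Type*} [Field Fq] [Field K] {q : ℕ} (hq : q ≠ 0)
    (e : Fq →+* K) (t : K) {f : Fq[X]} {n : ℕ} (h : f.natDegree ≤ n) :
    carlitz q e t f n = e (f.coeff n) := by
  rw [carlitz, Polynomial.sum_def, Finsupp.finsetSum_apply,
    Finset.sum_congr rfl (g := fun i => if i = n then e (f.coeff i) else 0)]
  · rw [Finset.sum_ite_eq', ite_eq_left_iff, notMem_support_iff]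
    intro hn
    rw [hn, map_zero]
  · intro i hi
    rw [Finsupp.smul_apply,
      tpow_add_tau_apply_of_le hq t ((le_natDegree_of_mem_supp i hi).trans h)]
    simp

theorem carlitz_C {Fq K : Type*} [Field Fq] [Field K] (q : ℕ) (e : Fq →+* K) (t : K) (c : Fq) :
    carlitz q e t (C c) = Finsupp.single 0 (e c) := by
  rw [carlitz, sum_C_index (by simp)]
  simp [tpow]

/-- The `τ`-degree of `φ(f)` is the degree of `f`. -/
theorem natDegree_le_of_carlitz_eq {Fq K : Type*} [Field Fq] [Field K] {q : ℕ} (hq : q ≠ 0)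
    (e : Fq →+* K) {s t : K} {f g : Fq[X]} (h : carlitz q e s f = carlitz q e t g) :
    f.natDegree ≤ g.natDegree := by
  by_contra! hlt
  have hc := carlitz_apply_of_natDegree_le hq e s (le_refl f.natDegree)
  rw [h, carlitz_apply_of_natDegree_le hq e t hlt.le, coeff_eq_zero_of_natDegree_lt hlt,
    map_zero, eq_comm, map_eq_zero, coeff_natDegree, leadingCoeff_eq_zero] at hc
  simp [hc] at hlt

/-- An element of infinite multiplicative order is transcendental over any finite subfield. -/
theorem transcendental_of_injective_pow {F K : Type*} [Field F] [Finite F] [Field K]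
    [Algebra F K] {t : K} (ht : Function.Injective fun n : ℕ => t ^ n) :
    Transcendental F t := by
  intro halg
  have := IntermediateField.adjoin.finiteDimensional halg.isIntegral
  have : Finite (IntermediateField.adjoin F {t}) := Module.finite_of_finite F
  refine not_injective_infinite_finite
    (fun n : ℕ => IntermediateField.AdjoinSimple.gen F t ^ n) fun a b hab => ht ?_
  simpa using congrArg (algebraMap (IntermediateField.adjoin F {t}) K) hab

/-- If `ψ(T) = t` has infinite multiplicative order (its powers are pairwise distinct),
then for `k ≠ l` the Carlitz modules `φ_k` with `φ_k(T) = ψ(T)^k + τ` satisfy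
`φ_k(F_q[T]) ∩ φ_l(F_q[T]) = F_q` (the constants). -/
theorem stmt15 {Fq K : Type*} [Field Fq] [Fintype Fq] [Field K]
    (p m q : ℕ) (hp : p.Prime) [CharP K p] (hq : q = p ^ m) (hm : 1 ≤ m)
    (hcard : Fintype.card Fq = q) (e : Fq →+* K)
    (t : K) (ht : Function.Injective fun n : ℕ => t ^ n) :
    ∀ k l : ℕ, 1 ≤ k → 1 ≤ l → k ≠ l →
      Set.range (carlitz q e (t ^ k)) ∩ Set.range (carlitz q e (t ^ l))
        = {f : ℕ →₀ K | ∃ c : Fq, f = Finsupp.single 0 (e c)} := by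
  intro k l _ _ hkl
  have hq0 : q ≠ 0 := hcard ▸ Fintype.card_ne_zero
  ext x
  constructor
  · rintro ⟨⟨f, rfl⟩, ⟨g, hg⟩⟩
    have hdeg : f.natDegree = g.natDegree :=
      (natDegree_le_of_carlitz_eq hq0 e hg.symm).antisymm (natDegree_le_of_carlitz_eq hq0 e hg)
    let _ : Algebra Fq K := e.toAlgebra
    have htr : Transcendental Fq t := transcendental_of_injective_pow ht
    have hexp : expand Fq l g = expand Fq k f := by
      apply transcendental_iff_injective.mp htr
      have h0 := DFunLike.congr_fun hg 0
      rw [carlitz_apply_zero, carlitz_apply_zero] at h0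
      rw [expand_aeval, expand_aeval]
      exact h0
    have hmul := congrArg natDegree hexp
    rw [natDegree_expand, natDegree_expand, hdeg] at hmul
    have hf : f.natDegree = 0 := by
      by_contra hne
      exact hkl (Nat.eq_of_mul_eq_mul_left (Nat.pos_of_ne_zero (hdeg ▸ hne)) hmul).symm
    refine ⟨f.coeff 0, ?_⟩
    rw [← carlitz_C q e (t ^ k), ← eq_C_of_natDegree_eq_zero hf]
  · rintro ⟨c, rfl⟩
    exact ⟨⟨C c, carlitz_C ..⟩, ⟨C c, carlitz_C ..⟩⟩
end

section
/- Let R be an integral domain with a language L extending the language of rings by constants and relations only, and suppose Hilbert's tenth problem over (R, L) has a positive answer (is decidable). Let α be integral over R with minimal polynomial having coefficients in R, lying in the fraction field's algebraic closure. Then Hilbert's tenth problem over R[α], in the language L augmented by a constant for α and a unary predicate for membership in R, also has a positive answer. -/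
/-- Terms in the language of rings augmented by constants from `γ`, with variables
from `Fin m`. -/
inductive RTerm (γ : Type) : ℕ → Type
  | var {m : ℕ} : Fin m → RTerm γ m
  | const {m : ℕ} : γ → RTerm γ m
  | zero {m : ℕ} : RTerm γ m
  | one {m : ℕ} : RTerm γ m
  | add {m : ℕ} : RTerm γ m → RTerm γ m → RTerm γ m
  | mul {m : ℕ} : RTerm γ m → RTerm γ m → RTerm γ m
  | neg {m : ℕ} : RTerm γ m → RTerm γ m

/-- Evaluation of a term in a ring `T`, given interpretations of the constants and an
assignment of the variables. -/
def RTerm.eval {γ : Type} {T : Type*} [Ring T] (cI : γ → T) {m : ℕ}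
    (v : Fin m → T) : RTerm γ m → T
  | .var i => v i
  | .const g => cI g
  | .zero => 0
  | .one => 1
  | .add s t => RTerm.eval cI v s + RTerm.eval cI v t
  | .mul s t => RTerm.eval cI v s * RTerm.eval cI v t
  | .neg s => - RTerm.eval cI v s

/-- A Diophantine system in the language of rings with constants `γ` and extra relation
symbols `rels`: finitely many equations between terms and finitely many atomic relation
conditions, in variables `Fin nvars` (all existentially quantified). -/
structure DSystem (γ : Type) (rels : ℕ → Type) where
  nvars : ℕ
  eqs : List (RTerm γ nvars × RTerm γ nvars)
  atoms : List (Σ n : ℕ, rels n × (Fin n → RTerm γ nvars))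

/-- Solvability of a Diophantine system in a ring `T` with given interpretations of the
constants and relations. -/
def DSystem.Solvable {γ : Type} {rels : ℕ → Type} {T : Type*} [Ring T] (cI : γ → T)
    (relI : ∀ n, rels n → (Fin n → T) → Prop) (S : DSystem γ rels) : Prop :=
  ∃ v : Fin S.nvars → T,
    (∀ e ∈ S.eqs, RTerm.eval cI v e.1 = RTerm.eval cI v e.2) ∧
    (∀ a ∈ S.atoms, relI a.1 a.2.1 fun i => RTerm.eval cI v (a.2.2 i))

/-- A Gödel numbering of terms. -/
def RTerm.enc {γ : Type} [Encodable γ] {m : ℕ} : RTerm γ m → ℕ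
  | .var i => Nat.pair 0 i
  | .const g => Nat.pair 1 (Encodable.encode g)
  | .zero => Nat.pair 2 0
  | .one => Nat.pair 3 0
  | .add s t => Nat.pair 4 (Nat.pair s.enc t.enc)
  | .mul s t => Nat.pair 5 (Nat.pair s.enc t.enc)
  | .neg s => Nat.pair 6 s.enc

/-- A Gödel numbering of Diophantine systems. -/
def DSystem.enc {γ : Type} {rels : ℕ → Type} [Encodable γ] [∀ n, Encodable (rels n)]
    (S : DSystem γ rels) : ℕ :=
  Nat.pair S.nvars (Nat.pair
    (Encodable.encode (S.eqs.map fun e => (e.1.enc, e.2.enc)))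
    (Encodable.encode (S.atoms.map fun a =>
      (a.1, Encodable.encode a.2.1, List.ofFn fun i => (a.2.2 i).enc))))

/-- Hilbert's tenth problem over `(T, L)` has a positive answer: there is a computable
procedure deciding solvability of Diophantine systems (via their Gödel numbers). -/
def HTPPos {γ : Type} {rels : ℕ → Type} [Encodable γ] [∀ n, Encodable (rels n)]
    (T : Type*) [Ring T] (cI : γ → T) (relI : ∀ n, rels n → (Fin n → T) → Prop) : Prop :=
  ∃ dec : ℕ → Bool, Computable dec ∧
    ∀ S : DSystem γ rels, (S.Solvable cI relI ↔ dec S.enc = true)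

/-- The relation symbols for `R[α]`: the old ones together with one new unary symbol
(membership in `R`). -/
def relsA (rels : ℕ → Type) : ℕ → Type
  | 0 => rels 0
  | 1 => Sum (rels 1) Unit
  | (n + 2) => rels (n + 2)

instance relsAEncodable {rels : ℕ → Type} [∀ n, Encodable (rels n)] (n : ℕ) :
    Encodable (relsA rels n) :=
  match n with
  | 0 => inferInstanceAs (Encodable (rels 0))
  | 1 => inferInstanceAs (Encodable (Sum (rels 1) Unit))
  | (n + 2) => inferInstanceAs (Encodable (rels (n + 2)))

/-- The interpretation of the relation symbols over `R[α] = Subring.closure (R ∪ {α})`: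
an old relation holds of a tuple iff all its entries lie in `R` and the original relation
holds, and the new unary symbol is interpreted as membership in `R`. -/
def relIA {A : Type*} [CommRing A] {rels : ℕ → Type} (R : Subring A) (α : A)
    (relI : ∀ n, rels n → (Fin n → R) → Prop) :
    ∀ n, relsA rels n → (Fin n → ↥(Subring.closure ((R : Set A) ∪ {α}))) → Prop :=
  fun n =>
    match n with
    | 0 => fun ρ v => ∃ w : Fin 0 → R, (∀ i, ((w i : A)) = ((v i : A))) ∧ relI 0 ρ w
    | 1 => fun ρ v =>
        match ρ with
        | Sum.inl ρ => ∃ w : Fin 1 → R, (∀ i, ((w i : A)) = ((v i : A))) ∧ relI 1 ρ w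
        | Sum.inr _ => ((v 0 : A)) ∈ R
    | (n + 2) => fun ρ v =>
        ∃ w : Fin (n + 2) → R, (∀ i, ((w i : A)) = ((v i : A))) ∧ relI (n + 2) ρ w

/-- The interpretation of the constants over `R[α]`: the old constants together with a new
constant denoting `α`. -/
def cIA {A : Type*} [CommRing A] {γ : Type} (R : Subring A) (α : A) (cI : γ → R) :
    γ ⊕ Unit → ↥(Subring.closure ((R : Set A) ∪ {α})) :=
  Sum.elim
    (fun g => ⟨(cI g : A), Subring.subset_closure (Set.mem_union_left _ (cI g).2)⟩)
    (fun _ => ⟨α, Subring.subset_closure (Set.mem_union_right _ rfl)⟩)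

section SymmetricElimination

open MvPolynomial

variable {R₀ Ω : Type*} [CommRing R₀] [Field Ω] [Algebra R₀ Ω] {d : ℕ}

/-- A symmetric polynomial takes values in the base ring at the roots of a polynomial that is
defined over the base ring. -/
theorem aeval_roots_mem_range_of_isSymmetric {p : Polynomial R₀} {β : Fin d → Ω}
    (hp : p.map (algebraMap R₀ Ω) = ∏ i, (Polynomial.X - Polynomial.C (β i)))
    {s : MvPolynomial (Fin d) R₀} (hs : s.IsSymmetric) :
    aeval β s ∈ (algebraMap R₀ Ω).range := by
  obtain ⟨q, hq⟩ := esymmAlgHom_surjective R₀ (σ := Fin d) (n := d) (by simp) ⟨s, hs⟩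
  have hq' : aeval (fun i : Fin d => esymm (Fin d) R₀ (i + 1)) q = s := by
    have := congrArg Subtype.val hq
    rwa [esymmAlgHom_apply] at this
  have hes : ∀ i : Fin d, ∃ a : R₀, algebraMap R₀ Ω a = aeval β (esymm (Fin d) R₀ (i + 1)) := by
    intro i
    have hc := congrArg (fun f => Polynomial.coeff f (d - (i + 1))) hp
    have h1 : ∏ i, (Polynomial.X - Polynomial.C (β i)) =
        (((Finset.univ.val.map β).map fun t => Polynomial.X - Polynomial.C t)).prod := by
      rw [Multiset.map_map]; rfl
    simp only [Polynomial.coeff_map] at hc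
    rw [h1, Multiset.prod_X_sub_C_coeff _ (by simp)] at hc
    rw [aeval_esymm_eq_multiset_esymm]
    have h2 : Multiset.card (Finset.univ.val.map β) - (d - (i + 1)) = (i + 1 : ℕ) := by
      simp; omega
    rw [h2] at hc
    refine ⟨(-1) ^ ((i : ℕ) + 1) * p.coeff (d - (i + 1)), ?_⟩
    rw [map_mul, hc, map_pow, map_neg, map_one, ← mul_assoc, ← mul_pow]
    simp
  choose a ha using hes
  refine ⟨aeval a q, ?_⟩
  rw [← hq', ← AlgHom.comp_apply, comp_aeval]
  simp only [← ha]
  exact (aeval_algebraMap_apply Ω a q).symm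

/-- Every polynomial in the roots is, uniformly in their ordering, a combination of finitely many
fixed ones. -/
theorem exists_uniform_spanning {p : Polynomial R₀} (hmonic : p.Monic) {β : Fin d → Ω}
    (hp : p.map (algebraMap R₀ Ω) = ∏ i, (Polynomial.X - Polynomial.C (β i))) :
    ∃ (N : ℕ) (ε : Fin N → MvPolynomial (Fin d) R₀), ∀ q : MvPolynomial (Fin d) R₀,
      ∃ c : Fin N → R₀, ∀ σ : Equiv.Perm (Fin d),
        aeval (β ∘ σ) q = ∑ i, algebraMap R₀ Ω (c i) * aeval (β ∘ σ) (ε i) := by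
  let x : Fin d → Equiv.Perm (Fin d) → Ω := fun i σ => β (σ i)
  have hint : ∀ y ∈ Set.range x, IsIntegral R₀ y := by
    rintro _ ⟨i, rfl⟩
    refine ⟨p, hmonic, ?_⟩
    funext σ
    have h0 : Polynomial.eval₂ (algebraMap R₀ Ω) (β (σ i)) p = 0 := by
      rw [← Polynomial.eval_map, hp, Polynomial.eval_prod]
      exact Finset.prod_eq_zero (Finset.mem_univ (σ i)) (by simp)
    have := Polynomial.hom_eval₂ p (algebraMap R₀ (Equiv.Perm (Fin d) → Ω))
      (Pi.evalRingHom (fun _ => Ω) σ) (x i)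
    exact this.trans h0
  have hev : ∀ (q : MvPolynomial (Fin d) R₀) (σ : Equiv.Perm (Fin d)),
      aeval x q σ = aeval (β ∘ σ) q := by
    intro q σ
    have := comp_aeval_apply (R := R₀) x (Pi.evalAlgHom R₀ (fun _ => Ω) σ) q
    exact this
  have hfg := fg_adjoin_of_finite (Set.finite_range x) hint
  rw [Submodule.fg_iff_exists_fin_generating_family] at hfg
  obtain ⟨N, e, he⟩ := hfg
  have hmem : ∀ i, ∃ q : MvPolynomial (Fin d) R₀, aeval x q = e i := by
    intro i
    have : e i ∈ Subalgebra.toSubmodule (Algebra.adjoin R₀ (Set.range x)) :=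
      he ▸ Submodule.subset_span ⟨i, rfl⟩
    rw [Subalgebra.mem_toSubmodule, Algebra.adjoin_range_eq_range_aeval] at this
    exact this
  choose ε hε using hmem
  refine ⟨N, ε, fun q => ?_⟩
  have : aeval x q ∈ Submodule.span R₀ (Set.range e) := by
    rw [he, Subalgebra.mem_toSubmodule, Algebra.adjoin_range_eq_range_aeval]
    exact ⟨q, rfl⟩
  obtain ⟨c, hc⟩ := (Submodule.mem_span_range_iff_exists_fun R₀).1 this
  refine ⟨c, fun σ => ?_⟩
  rw [← hev, ← hc]
  simp [← hev, hε, Algebra.smul_def]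

/-- There are finitely many polynomials over the base ring which detect whether `M` given linear
combinations of polynomials in the roots vanish simultaneously for some ordering of the roots. -/
theorem exists_elimination_polynomials {p : Polynomial R₀} {β : Fin d → Ω}
    (hp : p.map (algebraMap R₀ Ω) = ∏ i, (Polynomial.X - Polynomial.C (β i)))
    {N : ℕ} (ε : Fin N → MvPolynomial (Fin d) R₀) (M : ℕ) :
    ∃ F : List (MvPolynomial (ℕ × ℕ) R₀), ∀ y : ℕ × ℕ → Ω,
      (∀ f ∈ F, aeval y f = 0) ↔
        ∃ σ : Equiv.Perm (Fin d), ∀ j : Fin M, ∑ i : Fin N, y (j, i) * aeval (β ∘ σ) (ε i) = 0 := by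
  classical
  let E := MvPolynomial (Fin d) R₀
  let factor : Equiv.Perm (Fin d) → MvPolynomial (Fin M) (MvPolynomial (ℕ × ℕ) E) :=
    fun σ => ∑ j : Fin M, X j * C (∑ i : Fin N, X ((j : ℕ), (i : ℕ)) * C (rename σ (ε i)))
  let h : MvPolynomial (Fin M) (MvPolynomial (ℕ × ℕ) E) := ∏ σ, factor σ
  have hfix : ∀ τ : Equiv.Perm (Fin d),
      map (map (rename τ : E →ₐ[R₀] E).toRingHom) h = h := by
    intro τ
    have hfac : ∀ σ, map (map (rename τ : E →ₐ[R₀] E).toRingHom) (factor σ) =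
        factor (τ * σ) := by
      intro σ
      simp only [factor, map_sum, map_mul, map_X, map_C]
      simp [rename_rename, Equiv.Perm.coe_mul]
    simp only [h, map_prod, hfac]
    exact Fintype.prod_equiv (Equiv.mulLeft τ) _ _ fun σ => rfl
  have hsymm : ∀ a b, ((h.coeff a).coeff b : E).IsSymmetric := by
    intro a b τ
    conv_rhs => rw [← hfix τ, coeff_map, coeff_map]
    rfl
  have hlift : ∀ a, ∃ f : MvPolynomial (ℕ × ℕ) R₀,
      map (algebraMap R₀ Ω) f = map (aeval β : E →ₐ[R₀] Ω).toRingHom (h.coeff a) := by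
    intro a
    have : map (aeval β : E →ₐ[R₀] Ω).toRingHom (h.coeff a) ∈
        Set.range (map (algebraMap R₀ Ω)) := by
      rw [mem_range_map_iff_coeffs_subset]
      intro z hz
      obtain ⟨b, -, rfl⟩ := mem_coeffs_iff.1 hz
      rw [coeff_map]
      exact aeval_roots_mem_range_of_isSymmetric hp (hsymm a b)
    exact this
  choose f hf using hlift
  refine ⟨h.support.toList.map f, fun y => ?_⟩
  have hval : ∀ a, aeval y (f a) =
      (map (eval₂Hom (aeval β : E →ₐ[R₀] Ω).toRingHom y) h).coeff a := by
    intro a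
    rw [coeff_map, aeval_def, ← eval_map, hf, eval_map]
    rfl
  have hprod : map (eval₂Hom (aeval β : E →ₐ[R₀] Ω).toRingHom y) h =
      ∏ σ : Equiv.Perm (Fin d), ∑ j : Fin M,
        X j * C (∑ i : Fin N, y (j, i) * aeval (β ∘ σ) (ε i)) := by
    simp [h, factor, map_prod, aeval_rename]
  have hzero : (∀ g ∈ h.support.toList.map f, aeval y g = 0) ↔
      map (eval₂Hom (aeval β : E →ₐ[R₀] Ω).toRingHom y) h = 0 := by
    rw [MvPolynomial.ext_iff]
    constructor
    · intro H a
      by_cases ha : a ∈ h.support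
      · rw [← hval, coeff_zero]
        exact H _ (List.mem_map.2 ⟨a, Finset.mem_toList.2 ha, rfl⟩)
      · rw [coeff_map, notMem_support_iff.1 ha, map_zero, coeff_zero]
    · intro H g hg
      obtain ⟨a, -, rfl⟩ := List.mem_map.1 hg
      rw [hval, H, coeff_zero]
  rw [hzero, hprod, Finset.prod_eq_zero_iff]
  simp only [Finset.mem_univ, true_and]
  refine exists_congr fun σ => ⟨fun H j => ?_, fun H => ?_⟩
  · have := congrArg (coeff (Finsupp.single j 1)) H
    rw [coeff_sum, coeff_zero, Finset.sum_eq_single j] at this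
    · rw [mul_comm, coeff_C_mul, coeff_X, if_pos rfl, mul_one] at this
      exact this
    · intro k _ hk
      rw [mul_comm, coeff_C_mul, coeff_X, if_neg, mul_zero]
      intro he
      exact hk (Finsupp.single_left_injective one_ne_zero he)
    · simp
  · exact Finset.sum_eq_zero fun j _ => by rw [H j]; simp

end SymmetricElimination

/-- A family of subsets of a finite group that is closed under intersection and translation has a
member through which membership of the identity can be tested by nonemptiness. -/
theorem exists_one_mem_iff_inter_nonempty {G : Type*} [Group G] [Finite G] (𝓕 : Set (Set G))
    (huniv : Set.univ ∈ 𝓕) (hinter : ∀ s ∈ 𝓕, ∀ t ∈ 𝓕, s ∩ t ∈ 𝓕)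
    (htrans : ∀ s ∈ 𝓕, ∀ g : G, {x | x * g ∈ s} ∈ 𝓕) :
    ∃ s ∈ 𝓕, ∀ t ∈ 𝓕, 1 ∈ t ↔ (s ∩ t).Nonempty := by
  obtain ⟨s, ⟨hs, hs1⟩, hmin⟩ := (Set.toFinite {s | s ∈ 𝓕 ∧ (1 : G) ∈ s}).exists_minimal
    ⟨Set.univ, huniv, Set.mem_univ _⟩
  have hle : ∀ t ∈ 𝓕, (1 : G) ∈ t → s ⊆ t := fun t ht h1 =>
    (hmin ⟨hinter s hs t ht, hs1, h1⟩ Set.inter_subset_left).trans Set.inter_subset_right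
  refine ⟨s, hs, fun t ht => ⟨fun h1 => ⟨1, hs1, h1⟩, ?_⟩⟩
  rintro ⟨g, hgs, hgt⟩
  have hsub : s ⊆ {x | x * g ∈ s} := hle _ (htrans s hs g) (by simpa using hgs)
  have himage : (fun x => x * g) '' s = s :=
    Set.eq_of_subset_of_ncard_le (by rintro _ ⟨x, hx, rfl⟩; exact hsub hx)
      (Set.ncard_image_of_injective s (mul_left_injective g)).ge (Set.toFinite s)
  obtain ⟨x, hx, hxg⟩ := himage.ge hs1
  have := hle _ (htrans t ht g) (by simpa using hgt) hx
  simpa [hxg] using this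

namespace RTerm

variable {γ : Type}

/-- Renaming of the variables of a term. -/
def rename {m m' : ℕ} (f : Fin m → Fin m') : RTerm γ m → RTerm γ m'
  | .var i => .var (f i)
  | .const g => .const g
  | .zero => .zero
  | .one => .one
  | .add s t => .add (rename f s) (rename f t)
  | .mul s t => .mul (rename f s) (rename f t)
  | .neg s => .neg (rename f s)

theorem eval_rename {T : Type*} [Ring T] (cI : γ → T) {m m' : ℕ} (f : Fin m → Fin m')
    (v : Fin m' → T) (t : RTerm γ m) : (t.rename f).eval cI v = t.eval cI (v ∘ f) := by
  induction t <;> simp_all [rename, eval]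

theorem enc_rename [Encodable γ] {m m' : ℕ} (f : Fin m → Fin m') (hf : ∀ i, (f i : ℕ) = i)
    (t : RTerm γ m) : (t.rename f).enc = t.enc := by
  induction t <;> simp_all [rename, enc]

theorem enc_injective [Encodable γ] {m : ℕ} :
    Function.Injective (enc : RTerm γ m → ℕ) := by
  intro s
  induction s with
  | var i => intro t h; cases t <;> simp_all [enc, Fin.val_inj]
  | const g => intro t h; cases t <;> simp_all [enc]
  | zero => intro t h; cases t <;> simp_all [enc]
  | one => intro t h; cases t <;> simp_all [enc]
  | add s₁ s₂ h₁ h₂ =>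
    intro t h
    cases t <;> simp [enc] at h
    exact congrArg₂ _ (h₁ h.1) (h₂ h.2)
  | mul s₁ s₂ h₁ h₂ =>
    intro t h
    cases t <;> simp [enc] at h
    exact congrArg₂ _ (h₁ h.1) (h₂ h.2)
  | neg s h₁ =>
    intro t h
    cases t <;> simp [enc] at h
    exact congrArg _ (h₁ h)

/-- The entry of a list of rows of terms, with default value the term `0`. -/
def entry {m : ℕ} (L : List (List (RTerm γ m))) (p : ℕ × ℕ) : RTerm γ m :=
  (L.getD p.1 []).getD p.2 .zero

end RTerm

/-- An operation on lists of rows of terms, uniform in the number of variables, that is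
primitive recursive on Gödel numbers. -/
structure TermOp (γ : Type) [Encodable γ] where
  op : ∀ {m : ℕ}, List (List (RTerm γ m)) → RTerm γ m
  code : List (List ℕ) → ℕ
  code_primrec : Primrec code
  enc_op : ∀ {m : ℕ} (L : List (List (RTerm γ m))),
    (op L).enc = code (L.map (List.map RTerm.enc))

namespace TermOp

variable {γ : Type} [Encodable γ]

/-- The operation with a constant closed value. -/
def closed (t : RTerm γ 0) : TermOp γ where
  op _ := t.rename Fin.elim0
  code _ := t.enc
  code_primrec := .const _
  enc_op _ := RTerm.enc_rename _ (fun i => i.elim0) _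

/-- Extraction of an entry. -/
def entry (p : ℕ × ℕ) : TermOp γ where
  op L := RTerm.entry L p
  code L := (L.getD p.1 []).getD p.2 (Nat.pair 2 0)
  code_primrec := (Primrec.list_getD _).comp ((Primrec.list_getD _).comp .id (.const _)) (.const _)
  enc_op L := by
    have h1 := List.getD_map (l := L) (n := p.1) (d := []) (List.map RTerm.enc)
    rw [List.map_nil] at h1
    rw [h1]
    exact (List.getD_map _ RTerm.zero RTerm.enc).symm

/-- Sum of operations. -/
def add (S T : TermOp γ) : TermOp γ where
  op L := .add (S.op L) (T.op L)
  code L := Nat.pair 4 (Nat.pair (S.code L) (T.code L))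
  code_primrec := Primrec₂.natPair.comp (.const _)
    (Primrec₂.natPair.comp S.code_primrec T.code_primrec)
  enc_op L := by simp [RTerm.enc, S.enc_op, T.enc_op]

/-- Product of operations. -/
def mul (S T : TermOp γ) : TermOp γ where
  op L := .mul (S.op L) (T.op L)
  code L := Nat.pair 5 (Nat.pair (S.code L) (T.code L))
  code_primrec := Primrec₂.natPair.comp (.const _)
    (Primrec₂.natPair.comp S.code_primrec T.code_primrec)
  enc_op L := by simp [RTerm.enc, S.enc_op, T.enc_op]

end TermOp

theorem exists_closed_term {γ : Type} {R : Type*} [CommRing R] {cI : γ → R} {a : R}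
    (ha : a ∈ Subring.closure (Set.range cI)) :
    ∃ t : RTerm γ 0, ∀ v, t.eval cI v = a := by
  induction ha using Subring.closure_induction with
  | mem x hx => obtain ⟨g, rfl⟩ := hx; exact ⟨.const g, fun v => rfl⟩
  | zero => exact ⟨.zero, fun v => rfl⟩
  | one => exact ⟨.one, fun v => rfl⟩
  | add x y _ _ hx hy =>
    obtain ⟨s, hs⟩ := hx
    obtain ⟨t, ht⟩ := hy
    exact ⟨.add s t, fun v => by simp [RTerm.eval, hs, ht]⟩
  | neg x _ hx =>
    obtain ⟨s, hs⟩ := hx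
    exact ⟨.neg s, fun v => by simp [RTerm.eval, hs]⟩
  | mul x y _ _ hx hy =>
    obtain ⟨s, hs⟩ := hx
    obtain ⟨t, ht⟩ := hy
    exact ⟨.mul s t, fun v => by simp [RTerm.eval, hs, ht]⟩

/-- Polynomials whose coefficients are generated by the constants are realized by operations on
terms. -/
theorem exists_termOp {γ : Type} [Encodable γ] {R : Type*} [CommRing R] (cI : γ → R)
    (Q : MvPolynomial (ℕ × ℕ) (Subring.closure (Set.range cI))) :
    ∃ T : TermOp γ, ∀ {m : ℕ} (L : List (List (RTerm γ m))) (v : Fin m → R),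
      (T.op L).eval cI v = MvPolynomial.aeval (fun p => (RTerm.entry L p).eval cI v) Q := by
  induction Q using MvPolynomial.induction_on with
  | C a =>
    obtain ⟨t, ht⟩ := exists_closed_term a.2
    refine ⟨.closed t, fun L v => ?_⟩
    rw [MvPolynomial.aeval_C]
    exact (RTerm.eval_rename _ _ _ _).trans (ht _)
  | add P Q hP hQ =>
    obtain ⟨S, hS⟩ := hP
    obtain ⟨T, hT⟩ := hQ
    exact ⟨S.add T, fun L v => by rw [map_add, ← hS, ← hT]; rfl⟩
  | mul_X P p hP =>
    obtain ⟨S, hS⟩ := hP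
    exact ⟨S.mul (.entry p), fun L v => by rw [map_mul, ← hS, MvPolynomial.aeval_X]; rfl⟩

/-- The row of values of a family of operations. -/
def TermOp.row {γ : Type} [Encodable γ] {N m : ℕ} (O : Fin N → TermOp γ)
    (L : List (List (RTerm γ m))) : List (RTerm γ m) :=
  List.ofFn fun i => (O i).op L

section RowValue

open MvPolynomial

variable {γ : Type} {R : Type*} [CommRing R] (cI : γ → R) {Ω : Type*} [Field Ω] [Algebra R Ω]
  {d N : ℕ} (β : Fin d → Ω) (ε : Fin N → MvPolynomial (Fin d) (Subring.closure (Set.range cI)))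

/-- The value of a row of terms, read as the coefficients of the polynomials `ε` in the
reordering of `β` by `σ`. -/
noncomputable def rowValue (σ : Equiv.Perm (Fin d)) {m : ℕ} (v : Fin m → R)
    (l : List (RTerm γ m)) : Ω :=
  ∑ i : Fin N, algebraMap R Ω ((l.getD i .zero).eval cI v) * aeval (β ∘ σ) (ε i)

/-- The polynomials `ε` span all polynomials in `β`, uniformly in the ordering of `β`. -/
def UniformlySpans : Prop :=
  ∀ q : MvPolynomial (Fin d) (Subring.closure (Set.range cI)),
    ∃ c : Fin N → Subring.closure (Set.range cI), ∀ σ : Equiv.Perm (Fin d),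
      aeval (β ∘ σ) q = ∑ i, algebraMap _ Ω (c i) * aeval (β ∘ σ) (ε i)

variable {cI β ε}

theorem UniformlySpans.exists_coordinates (hε : UniformlySpans cI β ε)
    (q : MvPolynomial (ℕ × ℕ) (MvPolynomial (Fin d) (Subring.closure (Set.range cI)))) :
    ∃ Q : Fin N → MvPolynomial (ℕ × ℕ) (Subring.closure (Set.range cI)),
      ∀ (σ : Equiv.Perm (Fin d)) (y : ℕ × ℕ → Ω),
        eval₂ (aeval (β ∘ σ) : _ →ₐ[Subring.closure (Set.range cI)] Ω).toRingHom y q =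
          ∑ i, aeval y (Q i) * aeval (β ∘ σ) (ε i) := by
  induction q using MvPolynomial.induction_on with
  | C a =>
    obtain ⟨c, hc⟩ := hε a
    exact ⟨fun i => C (c i), fun σ y => by
      simp only [eval₂_C, aeval_C]
      exact hc σ⟩
  | add P Q hP hQ =>
    obtain ⟨S, hS⟩ := hP
    obtain ⟨T, hT⟩ := hQ
    exact ⟨fun i => S i + T i, fun σ y => by
      simp only [eval₂_add, hS, hT, map_add, add_mul, Finset.sum_add_distrib]⟩
  | mul_X P p hP =>
    obtain ⟨S, hS⟩ := hP
    refine ⟨fun i => S i * X p, fun σ y => ?_⟩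
    rw [eval₂_mul, hS, eval₂_X, Finset.sum_mul]
    refine Finset.sum_congr rfl fun i _ => ?_
    rw [map_mul, aeval_X]
    ring

variable [Encodable γ]

theorem UniformlySpans.exists_row (hε : UniformlySpans cI β ε)
    (q : MvPolynomial (ℕ × ℕ) (MvPolynomial (Fin d) (Subring.closure (Set.range cI)))) :
    ∃ O : Fin N → TermOp γ, ∀ {m : ℕ} (L : List (List (RTerm γ m))) (v : Fin m → R)
      (σ : Equiv.Perm (Fin d)), rowValue cI β ε σ v (TermOp.row O L) =
        eval₂ (aeval (β ∘ σ) : _ →ₐ[Subring.closure (Set.range cI)] Ω).toRingHom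
          (fun p => algebraMap R Ω ((RTerm.entry L p).eval cI v)) q := by
  obtain ⟨Q, hQ⟩ := hε.exists_coordinates q
  choose O hO using fun i => exists_termOp cI (Q i)
  refine ⟨O, fun L v σ => ?_⟩
  rw [hQ, rowValue]
  refine Finset.sum_congr rfl fun i _ => ?_
  have : ((TermOp.row O L).getD i .zero) = (O i).op L := by simp [TermOp.row]
  rw [this, hO]
  congr 1
  exact (aeval_algebraMap_apply Ω (fun p => (RTerm.entry L p).eval cI v) (Q i)).symm

/-- Operations on rows which implement the term constructors over the extension ring, together
with comparison of two rows, and comparison of a row with a term. -/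
structure RowOps (γ : Type) [Encodable γ] (N : ℕ) where
  (var const gen zero one add mul neg sub arg : Fin N → TermOp γ)

/-- Correctness of row operations; the new constant is the `i₀`-th root. -/
structure RowOps.Correct (O : RowOps γ N) (cI : γ → R) (β : Fin d → Ω)
    (ε : Fin N → MvPolynomial (Fin d) (Subring.closure (Set.range cI))) (i₀ : Fin d) : Prop where
  var : ∀ {m : ℕ} (v : Fin m → R) (σ : Equiv.Perm (Fin d)) (l : List (RTerm γ m)),
    rowValue cI β ε σ v (TermOp.row O.var [l]) =
      ∑ j : Fin d, algebraMap R Ω ((l.getD j .zero).eval cI v) * β (σ i₀) ^ (j : ℕ)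
  const : ∀ {m : ℕ} (v : Fin m → R) (σ : Equiv.Perm (Fin d)) (t : RTerm γ m),
    rowValue cI β ε σ v (TermOp.row O.const [[t]]) = algebraMap R Ω (t.eval cI v)
  gen : ∀ {m : ℕ} (v : Fin m → R) (σ : Equiv.Perm (Fin d)),
    rowValue cI β ε σ v (TermOp.row O.gen []) = β (σ i₀)
  zero : ∀ {m : ℕ} (v : Fin m → R) (σ : Equiv.Perm (Fin d)),
    rowValue cI β ε σ v (TermOp.row O.zero []) = 0
  one : ∀ {m : ℕ} (v : Fin m → R) (σ : Equiv.Perm (Fin d)),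
    rowValue cI β ε σ v (TermOp.row O.one []) = 1
  add : ∀ {m : ℕ} (v : Fin m → R) (σ : Equiv.Perm (Fin d)) (l l' : List (RTerm γ m)),
    rowValue cI β ε σ v (TermOp.row O.add [l, l']) =
      rowValue cI β ε σ v l + rowValue cI β ε σ v l'
  mul : ∀ {m : ℕ} (v : Fin m → R) (σ : Equiv.Perm (Fin d)) (l l' : List (RTerm γ m)),
    rowValue cI β ε σ v (TermOp.row O.mul [l, l']) =
      rowValue cI β ε σ v l * rowValue cI β ε σ v l'
  neg : ∀ {m : ℕ} (v : Fin m → R) (σ : Equiv.Perm (Fin d)) (l : List (RTerm γ m)),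
    rowValue cI β ε σ v (TermOp.row O.neg [l]) = - rowValue cI β ε σ v l
  sub : ∀ {m : ℕ} (v : Fin m → R) (σ : Equiv.Perm (Fin d)) (l l' : List (RTerm γ m)),
    rowValue cI β ε σ v (TermOp.row O.sub [l, l']) =
      rowValue cI β ε σ v l - rowValue cI β ε σ v l'
  arg : ∀ {m : ℕ} (v : Fin m → R) (σ : Equiv.Perm (Fin d)) (l : List (RTerm γ m))
    (t : RTerm γ m), rowValue cI β ε σ v (TermOp.row O.arg [l, [t]]) =
      rowValue cI β ε σ v l - algebraMap R Ω (t.eval cI v)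

theorem UniformlySpans.exists_rowOps (hε : UniformlySpans cI β ε) (i₀ : Fin d) :
    ∃ O : RowOps γ N, O.Correct cI β ε i₀ := by
  let E := MvPolynomial (Fin d) (Subring.closure (Set.range cI))
  let r : ℕ → MvPolynomial (ℕ × ℕ) E := fun k => ∑ i : Fin N, X (k, (i : ℕ)) * C (ε i)
  have hr : ∀ (k : ℕ) {m : ℕ} (L : List (List (RTerm γ m))) (v : Fin m → R)
      (σ : Equiv.Perm (Fin d)),
      eval₂ (aeval (β ∘ σ) : E →ₐ[Subring.closure (Set.range cI)] Ω).toRingHom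
        (fun p => algebraMap R Ω ((RTerm.entry L p).eval cI v)) (r k) =
      rowValue cI β ε σ v (L.getD k []) := by
    intro k m L v σ
    simp only [r, rowValue, eval₂_sum, eval₂_mul, eval₂_X, eval₂_C]
    rfl
  obtain ⟨var, hvar⟩ := hε.exists_row (∑ j : Fin d, X (0, (j : ℕ)) * C (X i₀ ^ (j : ℕ)))
  obtain ⟨const, hconst⟩ := hε.exists_row (X (0, 0))
  obtain ⟨gen, hgen⟩ := hε.exists_row (C (X i₀))
  obtain ⟨zero, hzero⟩ := hε.exists_row 0
  obtain ⟨one, hone⟩ := hε.exists_row 1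
  obtain ⟨add, hadd⟩ := hε.exists_row (r 0 + r 1)
  obtain ⟨mul, hmul⟩ := hε.exists_row (r 0 * r 1)
  obtain ⟨neg, hneg⟩ := hε.exists_row (- r 0)
  obtain ⟨sub, hsub⟩ := hε.exists_row (r 0 - r 1)
  obtain ⟨arg, harg⟩ := hε.exists_row (r 0 - X (1, 0))
  refine ⟨⟨var, const, gen, zero, one, add, mul, neg, sub, arg⟩,
    ⟨fun v σ l => ?_, fun v σ t => ?_, fun v σ => ?_, fun v σ => ?_, fun v σ => ?_,
      fun v σ l l' => ?_, fun v σ l l' => ?_, fun v σ l => ?_, fun v σ l l' => ?_,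
      fun v σ l t => ?_⟩⟩
  · rw [hvar]
    simp [eval₂_sum, RTerm.entry]
  · rw [hconst]
    simp [RTerm.entry]
  · rw [hgen]
    simp
  · rw [hzero]
    simp
  · rw [hone]
    simp
  · rw [hadd, eval₂_add, hr, hr]
    rfl
  · rw [hmul, eval₂_mul, hr, hr]
    rfl
  · rw [hneg, eval₂_neg, hr]
    rfl
  · rw [hsub, eval₂_sub, hr, hr]
    rfl
  · rw [harg, eval₂_sub, hr, eval₂_X]
    rfl

theorem UniformlySpans.exists_translation (hε : UniformlySpans cI β ε) (τ : Equiv.Perm (Fin d)) :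
    ∃ O : Fin N → TermOp γ, ∀ {m : ℕ} (v : Fin m → R) (σ : Equiv.Perm (Fin d))
      (l : List (RTerm γ m)),
      rowValue cI β ε σ v (TermOp.row O [l]) = rowValue cI β ε (σ * τ) v l := by
  obtain ⟨O, hO⟩ := hε.exists_row (∑ i : Fin N, X (0, (i : ℕ)) * C (rename τ (ε i)))
  refine ⟨O, fun v σ l => ?_⟩
  rw [hO]
  simp [rowValue, eval₂_sum, aeval_rename, RTerm.entry, Equiv.Perm.coe_mul, Function.comp_assoc]

/-- Operations which detect whether rows vanish simultaneously for some ordering of `β`. -/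
theorem exists_elimination_termOps [FaithfulSMul R Ω]
    {p : Polynomial (Subring.closure (Set.range cI))}
    (hp : p.map (algebraMap _ Ω) = ∏ i, (Polynomial.X - Polynomial.C (β i))) (M : ℕ) :
    ∃ F : List (TermOp γ), ∀ {m : ℕ} (L : List (List (RTerm γ m))) (v : Fin m → R),
      (∀ T ∈ F, (T.op L).eval cI v = 0) ↔
        ∃ σ : Equiv.Perm (Fin d), ∀ j : Fin M, rowValue cI β ε σ v (L.getD j []) = 0 := by
  obtain ⟨F, hF⟩ := exists_elimination_polynomials hp ε M
  choose T hT using exists_termOp cI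
  refine ⟨F.map T, fun L v => ?_⟩
  refine Iff.trans ?_ (hF fun p => algebraMap R Ω ((RTerm.entry L p).eval cI v))
  simp only [List.mem_map, forall_exists_index, and_imp, forall_apply_eq_imp_iff₂]
  refine forall₂_congr fun f _ => ?_
  rw [hT, ← (FaithfulSMul.algebraMap_injective R Ω).eq_iff, map_zero]
  exact Eq.congr_left (aeval_algebraMap_apply Ω (fun p => (RTerm.entry L p).eval cI v) f).symm

end RowValue

/-- A system of rows of terms, to be read as conditions on the roots, and of atomic relation
conditions over the base ring. -/
structure CondSystem (γ : Type) (rels : ℕ → Type) where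
  nvars : ℕ
  conds : List (List (RTerm γ nvars))
  atoms : List (Σ n : ℕ, rels n × (Fin n → RTerm γ nvars))

/-- Renaming of the variables of an atomic condition. -/
def renameAtom {γ : Type} {rels : ℕ → Type} {m m' : ℕ} (f : Fin m → Fin m')
    (a : Σ n : ℕ, rels n × (Fin n → RTerm γ m)) : Σ n : ℕ, rels n × (Fin n → RTerm γ m') :=
  ⟨a.1, a.2.1, fun i => (a.2.2 i).rename f⟩

/-- All lists of length `n` with entries in a given list. -/
def List.tuples {α : Type*} : ℕ → List α → List (List α)
  | 0, _ => [[]]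
  | n + 1, l => l.flatMap fun a => (List.tuples n l).map (List.cons a)

theorem List.mem_tuples {α : Type*} {n : ℕ} {l L : List α} :
    L ∈ List.tuples n l ↔ L.length = n ∧ ∀ a ∈ L, a ∈ l := by
  induction n generalizing L with
  | zero => cases L <;> simp [List.tuples]
  | succ n ih =>
    cases L with
    | nil => simp [List.tuples]
    | cons a L => simp [List.tuples, ih]; tauto

theorem List.tuples_map {α β : Type*} (f : α → β) (n : ℕ) (l : List α) :
    List.tuples n (l.map f) = (List.tuples n l).map (List.map f) := by
  induction n with
  | zero => rfl
  | succ n ih => simp [List.tuples, ih, List.flatMap_map, List.map_flatMap, Function.comp_def]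

namespace CondSystem

variable {γ : Type} {rels : ℕ → Type}

/-- The system without variables and conditions. -/
def empty : CondSystem γ rels := ⟨0, [], []⟩

/-- Conjunction of systems in disjoint sets of variables. -/
def conj (φ ψ : CondSystem γ rels) : CondSystem γ rels where
  nvars := φ.nvars + ψ.nvars
  conds := φ.conds.map (List.map (RTerm.rename (Fin.castAdd ψ.nvars))) ++
    ψ.conds.map (List.map (RTerm.rename (Fin.natAdd φ.nvars)))
  atoms := φ.atoms.map (renameAtom (Fin.castAdd ψ.nvars)) ++
    ψ.atoms.map (renameAtom (Fin.natAdd φ.nvars))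

/-- Replacement of the rows by the values of operations. -/
def mapConds [Encodable γ] {N : ℕ} (O : Fin N → TermOp γ) (φ : CondSystem γ rels) :
    CondSystem γ rels where
  nvars := φ.nvars
  conds := φ.conds.map fun c => TermOp.row O [c]
  atoms := φ.atoms

variable {R : Type*} [CommRing R] (cI : γ → R) (relI : ∀ n, rels n → (Fin n → R) → Prop)
  {Ω : Type*} [Field Ω] [Algebra R Ω] {d N : ℕ} (β : Fin d → Ω)
  (ε : Fin N → MvPolynomial (Fin d) (Subring.closure (Set.range cI)))

/-- The rows vanish and the atomic conditions hold, for a given assignment and ordering. -/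
def HoldsFor {m : ℕ} (conds : List (List (RTerm γ m)))
    (atoms : List (Σ n : ℕ, rels n × (Fin n → RTerm γ m))) (σ : Equiv.Perm (Fin d))
    (v : Fin m → R) : Prop :=
  (∀ c ∈ conds, rowValue cI β ε σ v c = 0) ∧
    ∀ a ∈ atoms, relI a.1 a.2.1 fun i => (a.2.2 i).eval cI v

/-- The system is solvable for the ordering `σ` of the roots. -/
def HoldsAt (φ : CondSystem γ rels) (σ : Equiv.Perm (Fin d)) : Prop :=
  ∃ v, HoldsFor cI relI β ε φ.conds φ.atoms σ v

variable {cI relI β ε}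

theorem holdsAt_mk {m : ℕ} {conds : List (List (RTerm γ m))}
    {atoms : List (Σ n : ℕ, rels n × (Fin n → RTerm γ m))} {σ : Equiv.Perm (Fin d)} :
    HoldsAt cI relI β ε ⟨m, conds, atoms⟩ σ ↔ ∃ v, HoldsFor cI relI β ε conds atoms σ v :=
  Iff.rfl

theorem empty_holdsAt (σ : Equiv.Perm (Fin d)) :
    (empty : CondSystem γ rels).HoldsAt cI relI β ε σ :=
  holdsAt_mk.2 ⟨Fin.elim0, by simp [HoldsFor]⟩

theorem rowValue_rename {m m' : ℕ} (f : Fin m → Fin m') (σ : Equiv.Perm (Fin d))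
    (v : Fin m' → R) (l : List (RTerm γ m)) :
    rowValue cI β ε σ v (l.map (RTerm.rename f)) = rowValue cI β ε σ (v ∘ f) l := by
  refine Finset.sum_congr rfl fun i _ => ?_
  rw [← RTerm.eval_rename]
  congr 3
  exact List.getD_map _ RTerm.zero (RTerm.rename f)

theorem holdsFor_rename {m m' : ℕ} {conds : List (List (RTerm γ m))}
    {atoms : List (Σ n : ℕ, rels n × (Fin n → RTerm γ m))} {f : Fin m → Fin m'}
    {σ : Equiv.Perm (Fin d)} {v : Fin m' → R} :
    HoldsFor cI relI β ε (conds.map (List.map (RTerm.rename f))) (atoms.map (renameAtom f)) σ v ↔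
      HoldsFor cI relI β ε conds atoms σ (v ∘ f) := by
  simp only [HoldsFor, List.forall_mem_map, rowValue_rename, renameAtom, RTerm.eval_rename]

theorem holdsFor_append {m : ℕ} {c c' : List (List (RTerm γ m))}
    {a a' : List (Σ n : ℕ, rels n × (Fin n → RTerm γ m))} {σ : Equiv.Perm (Fin d)}
    {v : Fin m → R} :
    HoldsFor cI relI β ε (c ++ c') (a ++ a') σ v ↔
      HoldsFor cI relI β ε c a σ v ∧ HoldsFor cI relI β ε c' a' σ v := by
  simp only [HoldsFor, List.forall_mem_append]
  tauto

theorem conj_holdsAt {φ ψ : CondSystem γ rels} {σ : Equiv.Perm (Fin d)} :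
    (φ.conj ψ).HoldsAt cI relI β ε σ ↔
      φ.HoldsAt cI relI β ε σ ∧ ψ.HoldsAt cI relI β ε σ := by
  rw [conj, holdsAt_mk]
  simp only [holdsFor_append, holdsFor_rename]
  constructor
  · rintro ⟨v, hv, hv'⟩
    exact ⟨⟨_, hv⟩, ⟨_, hv'⟩⟩
  · rintro ⟨⟨v, hv⟩, ⟨w, hw⟩⟩
    refine ⟨Fin.append v w, ?_⟩
    have h1 : Fin.append v w ∘ Fin.castAdd ψ.nvars = v := funext fun i => by simp
    have h2 : Fin.append v w ∘ Fin.natAdd φ.nvars = w := funext fun i => by simp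
    rw [h1, h2]
    exact ⟨hv, hw⟩

variable [Encodable γ]

theorem mapConds_holdsAt {φ : CondSystem γ rels} {O : Fin N → TermOp γ}
    {τ : Equiv.Perm (Fin d)}
    (hO : ∀ {m : ℕ} (v : Fin m → R) (σ : Equiv.Perm (Fin d)) (l : List (RTerm γ m)),
      rowValue cI β ε σ v (TermOp.row O [l]) = rowValue cI β ε (σ * τ) v l)
    {σ : Equiv.Perm (Fin d)} :
    (φ.mapConds O).HoldsAt cI relI β ε σ ↔ φ.HoldsAt cI relI β ε (σ * τ) := by
  rw [mapConds, holdsAt_mk]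
  simp only [HoldsAt, HoldsFor, List.forall_mem_map, hO]

/-- The equations which state that every `M` of the rows satisfy the equations `F`. -/
def eliminationEqs (F : List (TermOp γ)) (M : ℕ) {m : ℕ} (conds : List (List (RTerm γ m))) :
    List (RTerm γ m × RTerm γ m) :=
  (List.tuples M conds).flatMap fun L => F.map fun T => (T.op L, .zero)

/-- The Diophantine system which states that every `M` of the rows satisfy the equations `F`. -/
def eliminate (F : List (TermOp γ)) (M : ℕ) (φ : CondSystem γ rels) : DSystem γ rels where
  nvars := φ.nvars
  eqs := eliminationEqs F M φ.conds
  atoms := φ.atoms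

theorem eliminate_solvable {F : List (TermOp γ)}
    (hF : ∀ {m : ℕ} (L : List (List (RTerm γ m))) (v : Fin m → R),
      (∀ T ∈ F, (T.op L).eval cI v = 0) ↔ ∃ σ : Equiv.Perm (Fin d),
        ∀ j : Fin (Fintype.card (Equiv.Perm (Fin d))), rowValue cI β ε σ v (L.getD j []) = 0)
    (φ : CondSystem γ rels) :
    (φ.eliminate F (Fintype.card (Equiv.Perm (Fin d)))).Solvable cI relI ↔
      ∃ σ, φ.HoldsAt cI relI β ε σ := by
  have key : ∀ v : Fin φ.nvars → R,
      (∀ e ∈ eliminationEqs F (Fintype.card (Equiv.Perm (Fin d))) φ.conds,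
        e.1.eval cI v = e.2.eval cI v) ↔
      ∃ σ : Equiv.Perm (Fin d), ∀ c ∈ φ.conds, rowValue cI β ε σ v c = 0 := by
    intro v
    have h1 : (∀ e ∈ eliminationEqs F (Fintype.card (Equiv.Perm (Fin d))) φ.conds,
        e.1.eval cI v = e.2.eval cI v) ↔
        ∀ L ∈ List.tuples (Fintype.card (Equiv.Perm (Fin d))) φ.conds,
          ∀ T ∈ F, (T.op L).eval cI v = 0 := by
      simp only [eliminationEqs, List.mem_flatMap, List.mem_map]
      constructor
      · intro h L hL T hT
        exact h _ ⟨L, hL, T, hT, rfl⟩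
      · rintro h _ ⟨L, hL, T, hT, rfl⟩
        exact h L hL T hT
    rw [h1]
    constructor
    · intro h
      by_contra! hbad
      choose c hc hne using hbad
      let eqv := Fintype.equivFin (Equiv.Perm (Fin d))
      obtain ⟨σ, hσ⟩ := (hF _ v).1 (h (List.ofFn fun j => c (eqv.symm j))
        (List.mem_tuples.2 ⟨by simp, by
          intro a ha
          obtain ⟨j, rfl⟩ := (List.mem_ofFn' _ _).1 ha
          exact hc _⟩))
      have := hσ (eqv σ)
      simp [eqv] at this
      exact hne σ this
    · rintro ⟨σ, hσ⟩ L hL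
      obtain ⟨hlen, hmem⟩ := List.mem_tuples.1 hL
      refine (hF L v).2 ⟨σ, fun j => hσ _ (hmem _ ?_)⟩
      rw [List.getD_eq_getElem _ _ (by omega)]
      exact List.getElem_mem _
  constructor
  · rintro ⟨v, he, ha⟩
    obtain ⟨σ, hσ⟩ := (key v).1 he
    exact ⟨σ, v, hσ, ha⟩
  · rintro ⟨σ, v, hσ, ha⟩
    exact ⟨v, (key v).2 ⟨σ, hσ⟩, ha⟩

end CondSystem

/-- The old relation symbol underlying a relation symbol of the extended language, if any. -/
def oldSymbol {rels : ℕ → Type} : ∀ {n : ℕ}, relsA rels n → Option (rels n)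
  | 0, ρ => some ρ
  | 1, ρ => Sum.elim some (fun _ => none) ρ
  | _ + 2, ρ => some ρ

theorem relIA_iff {A : Type*} [CommRing A] {rels : ℕ → Type} (R : Subring A) (α : A)
    (relI : ∀ n, rels n → (Fin n → R) → Prop) {n : ℕ} (ρ : relsA rels n)
    (v : Fin n → Subring.closure ((R : Set A) ∪ {α})) :
    relIA R α relI n ρ v ↔
      ∃ w : Fin n → R, (∀ i, (w i : A) = v i) ∧ ∀ ρ' ∈ oldSymbol ρ, relI n ρ' w := by
  match n, ρ with
  | 0, ρ => exact ⟨fun ⟨w, h, hr⟩ => ⟨w, h, fun _ hρ => Option.some.inj hρ ▸ hr⟩,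
      fun ⟨w, h, hr⟩ => ⟨w, h, hr ρ rfl⟩⟩
  | 1, Sum.inl ρ => simp [relIA, oldSymbol]
  | 1, Sum.inr _ =>
    simp only [relIA, oldSymbol, Sum.elim_inr]
    constructor
    · intro h
      exact ⟨fun _ => ⟨_, h⟩, fun i => by rw [Subsingleton.elim i 0], by simp⟩
    · rintro ⟨w, hw, -⟩
      rw [← hw 0]
      exact (w 0).2
  | n + 2, ρ => exact ⟨fun ⟨w, h, hr⟩ => ⟨w, h, fun _ hρ => Option.some.inj hρ ▸ hr⟩,
      fun ⟨w, h, hr⟩ => ⟨w, h, hr ρ rfl⟩⟩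

theorem encode_le_encode_of_mem {α : Type*} [Encodable α] {a : α} {l : List α} (h : a ∈ l) :
    Encodable.encode a ≤ Encodable.encode l := by
  induction l with
  | nil => simp at h
  | cons b l ih =>
    rw [Encodable.encode_list_cons]
    rcases List.mem_cons.1 h with rfl | h
    · exact (Nat.left_le_pair _ _).trans (Nat.le_succ _)
    · exact (ih h).trans ((Nat.right_le_pair _ _).trans (Nat.le_succ _))

theorem DSystem.enc_arg_le {γ : Type} {rels : ℕ → Type} [Encodable γ]
    [∀ n, Encodable (rels n)] (S : DSystem γ rels)
    {a : Σ n : ℕ, rels n × (Fin n → RTerm γ S.nvars)} (ha : a ∈ S.atoms) (i : Fin a.1) :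
    (a.2.2 i).enc ≤ S.enc := by
  have h1 : (a.2.2 i).enc ≤ Encodable.encode (List.ofFn fun i => (a.2.2 i).enc) :=
    encode_le_encode_of_mem (a := (a.2.2 i).enc) ((List.mem_ofFn' _ _).2 ⟨i, rfl⟩)
  have h2 := encode_le_encode_of_mem (List.mem_map_of_mem (f := fun a =>
    (a.1, Encodable.encode a.2.1, List.ofFn fun i => (a.2.2 i).enc)) ha)
  refine h1.trans (le_trans ?_ (h2.trans ?_))
  · exact (Nat.right_le_pair _ _).trans (Nat.right_le_pair _ _)
  · exact (Nat.right_le_pair _ _).trans (Nat.right_le_pair _ _)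

namespace RowOps

variable {γ : Type} [Encodable γ] {N : ℕ}

/-- The row of a term over the extension ring, given the coefficients of the variables. -/
def transTerm (O : RowOps γ N) {m m' : ℕ} (y : Fin m → List (RTerm γ m')) :
    RTerm (γ ⊕ Unit) m → List (RTerm γ m')
  | .var k => TermOp.row O.var [y k]
  | .const (.inl g) => TermOp.row O.const [[.const g]]
  | .const (.inr _) => TermOp.row O.gen []
  | .zero => TermOp.row O.zero []
  | .one => TermOp.row O.one []
  | .add s t => TermOp.row O.add [O.transTerm y s, O.transTerm y t]
  | .mul s t => TermOp.row O.mul [O.transTerm y s, O.transTerm y t]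
  | .neg s => TermOp.row O.neg [O.transTerm y s]

variable {R : Type*} [CommRing R] {cI : γ → R} {Ω : Type*} [Field Ω] [Algebra R Ω]
  {d : ℕ} {β : Fin d → Ω} {ε : Fin N → MvPolynomial (Fin d) (Subring.closure (Set.range cI))}

/-- The value of a term over the extension ring whose variables are given by coefficients. -/
noncomputable def extensionValue (cI : γ → R) (x : Ω) {m : ℕ} (y : Fin m → Fin d → R)
    (t : RTerm (γ ⊕ Unit) m) : Ω :=
  t.eval (Sum.elim (fun g => algebraMap R Ω (cI g)) fun _ => x)
    fun k => ∑ j : Fin d, algebraMap R Ω (y k j) * x ^ (j : ℕ)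

theorem Correct.rowValue_transTerm {O : RowOps γ N} {i₀ : Fin d} (hO : O.Correct cI β ε i₀)
    {m m' : ℕ} (y : Fin m → List (RTerm γ m')) (v : Fin m' → R) (σ : Equiv.Perm (Fin d))
    (t : RTerm (γ ⊕ Unit) m) :
    rowValue cI β ε σ v (O.transTerm y t) =
      extensionValue cI (β (σ i₀)) (fun k (j : Fin d) => ((y k).getD j .zero).eval cI v) t := by
  unfold extensionValue
  induction t with
  | var k => simp only [transTerm, hO.var, RTerm.eval]
  | const g =>
    rcases g with g | g
    · simp only [transTerm, hO.const, RTerm.eval, Sum.elim_inl]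
    · simp only [transTerm, hO.gen, RTerm.eval, Sum.elim_inr]
  | zero => simp only [transTerm, hO.zero, RTerm.eval]
  | one => simp only [transTerm, hO.one, RTerm.eval]
  | add s t hs ht => simp only [transTerm, hO.add, RTerm.eval, hs, ht]
  | mul s t hs ht => simp only [transTerm, hO.mul, RTerm.eval, hs, ht]
  | neg s hs => simp only [transTerm, hO.neg, RTerm.eval, hs]

/-- The variables which stand for the coefficients of the `k`-th variable of a system. -/
def coeffVars (m₀ m d W : ℕ) (k : Fin m) : List (RTerm γ (m₀ + (m * d + (W + 1)))) :=
  List.ofFn fun j : Fin d => .var (.natAdd m₀ (.castAdd (W + 1) (finProdFinEquiv (k, j))))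

/-- The variable which stands for the argument with Gödel number `n` of an atomic condition. -/
def argVar (m₀ m d W n : ℕ) : RTerm γ (m₀ + (m * d + (W + 1))) :=
  .var (.natAdd m₀ (.natAdd (m * d) (Fin.ofNat (W + 1) n)))

variable {rels : ℕ → Type}

/-- The rows of a system over the extension ring. -/
def transConds (O : RowOps γ N) (d m₀ W : ℕ) (S : DSystem (γ ⊕ Unit) (relsA rels)) :
    List (List (RTerm γ (m₀ + (S.nvars * d + (W + 1))))) :=
  (S.eqs.map fun e => TermOp.row O.sub
    [O.transTerm (coeffVars m₀ S.nvars d W) e.1, O.transTerm (coeffVars m₀ S.nvars d W) e.2]) ++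
  S.atoms.flatMap fun a => List.ofFn fun i => TermOp.row O.arg
    [O.transTerm (coeffVars m₀ S.nvars d W) (a.2.2 i),
      [argVar m₀ S.nvars d W (a.2.2 i).enc]]

/-- The atomic conditions of a system over the extension ring. -/
def transAtoms (d m₀ W : ℕ) (S : DSystem (γ ⊕ Unit) (relsA rels)) :
    List (Σ n : ℕ, rels n × (Fin n → RTerm γ (m₀ + (S.nvars * d + (W + 1))))) :=
  S.atoms.filterMap fun a => (oldSymbol a.2.1).map fun ρ =>
    ⟨a.1, ρ, fun i => argVar m₀ S.nvars d W (a.2.2 i).enc⟩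

/-- The conjunction of a fixed system with the translation of a system over the extension
ring. -/
def translate [∀ n, Encodable (rels n)] (O : RowOps γ N) (d : ℕ) (φ : CondSystem γ rels)
    (S : DSystem (γ ⊕ Unit) (relsA rels)) : CondSystem γ rels where
  nvars := φ.nvars + (S.nvars * d + (S.enc + 1))
  conds := φ.conds.map (List.map (RTerm.rename (Fin.castAdd _))) ++ O.transConds d φ.nvars S.enc S
  atoms := φ.atoms.map (renameAtom (Fin.castAdd _)) ++ transAtoms d φ.nvars S.enc S

/-- Solvability of a system over the extension ring generated by `x`, in terms of coefficients
of the variables. -/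
def ExtensionHolds (cI : γ → R) (relI : ∀ n, rels n → (Fin n → R) → Prop) (d : ℕ) (x : Ω)
    (S : DSystem (γ ⊕ Unit) (relsA rels)) : Prop :=
  ∃ y : Fin S.nvars → Fin d → R,
    (∀ e ∈ S.eqs, extensionValue cI x y e.1 = extensionValue cI x y e.2) ∧
    ∀ a ∈ S.atoms, ∃ w : Fin a.1 → R,
      (∀ i, extensionValue cI x y (a.2.2 i) = algebraMap R Ω (w i)) ∧
        ∀ ρ ∈ oldSymbol a.2.1, relI a.1 ρ w

variable {relI : ∀ n, rels n → (Fin n → R) → Prop}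

theorem Correct.holdsFor_trans {O : RowOps γ N} {i₀ : Fin d} (hO : O.Correct cI β ε i₀)
    (m₀ W : ℕ) (S : DSystem (γ ⊕ Unit) (relsA rels)) (σ : Equiv.Perm (Fin d))
    (v₀ : Fin m₀ → R) (y : Fin S.nvars → Fin d → R) (w : Fin (W + 1) → R) :
    CondSystem.HoldsFor cI relI β ε (O.transConds d m₀ W S) (transAtoms d m₀ W S) σ
      (Fin.append v₀ (Fin.append (fun k => y (finProdFinEquiv.symm k).1
        (finProdFinEquiv.symm k).2) w)) ↔
    (∀ e ∈ S.eqs, extensionValue cI (β (σ i₀)) y e.1 = extensionValue cI (β (σ i₀)) y e.2) ∧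
    ∀ a ∈ S.atoms,
      (∀ i, extensionValue cI (β (σ i₀)) y (a.2.2 i) =
        algebraMap R Ω (w (Fin.ofNat (W + 1) (a.2.2 i).enc))) ∧
      ∀ ρ ∈ oldSymbol a.2.1, relI a.1 ρ fun i => w (Fin.ofNat (W + 1) (a.2.2 i).enc) := by
  set v := Fin.append v₀ (Fin.append (fun k => y (finProdFinEquiv.symm k).1
        (finProdFinEquiv.symm k).2) w) with hv
  have hy : (fun (k : Fin S.nvars) (j : Fin d) =>
      ((coeffVars (γ := γ) m₀ S.nvars d W k).getD j .zero).eval cI v) = y := by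
    funext k j
    simp [coeffVars, RTerm.eval, hv, -finProdFinEquiv_symm_apply, -finProdFinEquiv_apply_val]
  have hw : ∀ n, (argVar (γ := γ) m₀ S.nvars d W n).eval cI v = w (Fin.ofNat (W + 1) n) := by
    intro n
    simp [argVar, RTerm.eval, hv]
  have hconds : (∀ c ∈ O.transConds d m₀ W S, rowValue cI β ε σ v c = 0) ↔
      (∀ e ∈ S.eqs, extensionValue cI (β (σ i₀)) y e.1 = extensionValue cI (β (σ i₀)) y e.2) ∧
      ∀ a ∈ S.atoms, ∀ i, extensionValue cI (β (σ i₀)) y (a.2.2 i) =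
        algebraMap R Ω (w (Fin.ofNat (W + 1) (a.2.2 i).enc)) := by
    simp only [transConds, List.forall_mem_append, List.forall_mem_map, List.forall_mem_flatMap,
      List.forall_mem_ofFn_iff, hO.sub, hO.arg, hO.rowValue_transTerm, hy, hw, sub_eq_zero]
  have hatoms : (∀ a ∈ transAtoms d m₀ W S, relI a.1 a.2.1 fun i => (a.2.2 i).eval cI v) ↔
      ∀ a ∈ S.atoms, ∀ ρ ∈ oldSymbol a.2.1,
        relI a.1 ρ fun i => w (Fin.ofNat (W + 1) (a.2.2 i).enc) := by
    simp only [transAtoms, List.mem_filterMap, Option.map_eq_some_iff]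
    constructor
    · intro h a ha ρ hρ
      simpa only [hw] using h _ ⟨a, ha, ρ, hρ, rfl⟩
    · rintro h _ ⟨a, ha, ρ, hρ, rfl⟩
      simpa only [hw] using h a ha ρ hρ
  rw [CondSystem.HoldsFor, hconds, hatoms]
  constructor
  · rintro ⟨⟨h1, h2⟩, h3⟩
    exact ⟨h1, fun a ha => ⟨h2 a ha, h3 a ha⟩⟩
  · rintro ⟨h1, h2⟩
    exact ⟨⟨h1, fun a ha => (h2 a ha).1⟩, fun a ha => (h2 a ha).2⟩

theorem Correct.translate_holdsAt [∀ n, Encodable (rels n)] [FaithfulSMul R Ω]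
    {O : RowOps γ N} {i₀ : Fin d} (hO : O.Correct cI β ε i₀) (φ : CondSystem γ rels)
    (S : DSystem (γ ⊕ Unit) (relsA rels)) (σ : Equiv.Perm (Fin d)) :
    (O.translate d φ S).HoldsAt cI relI β ε σ ↔
      φ.HoldsAt cI relI β ε σ ∧ ExtensionHolds cI relI d (β (σ i₀)) S := by
  rw [translate, CondSystem.holdsAt_mk]
  simp only [CondSystem.holdsFor_append, CondSystem.holdsFor_rename]
  constructor
  · rintro ⟨v, hv₀, hv⟩
    refine ⟨⟨_, hv₀⟩, ?_⟩
    have hsplit : v = Fin.append (fun i => v (Fin.castAdd _ i)) (Fin.append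
        (fun k => (fun k' j => v (Fin.natAdd _ (Fin.castAdd _ (finProdFinEquiv (k', j)))))
          (finProdFinEquiv.symm k).1 (finProdFinEquiv.symm k).2)
        (fun n => v (Fin.natAdd _ (Fin.natAdd _ n)))) := by
      funext i
      refine Fin.addCases (fun i => by simp) (fun i => ?_) i
      refine Fin.addCases (fun i => by simp [-finProdFinEquiv_symm_apply]) (fun i => by simp) i
    rw [hsplit] at hv
    have h := (hO.holdsFor_trans _ _ S σ _
      (fun k' j => v (Fin.natAdd _ (Fin.castAdd _ (finProdFinEquiv (k', j))))) _).1 hv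
    exact ⟨_, h.1, fun a ha => ⟨_, h.2 a ha⟩⟩
  · rintro ⟨⟨v₀, hv₀⟩, y, heqs, hatoms⟩
    let w : Fin (S.enc + 1) → R := fun n => Classical.epsilon fun r =>
      ∃ t : RTerm (γ ⊕ Unit) S.nvars, t.enc = n ∧
        extensionValue cI (β (σ i₀)) y t = algebraMap R Ω r
    refine ⟨Fin.append v₀ (Fin.append (fun k => y (finProdFinEquiv.symm k).1
        (finProdFinEquiv.symm k).2) w), ?_, ?_⟩
    · have : Fin.append v₀ (Fin.append (fun k => y (finProdFinEquiv.symm k).1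
          (finProdFinEquiv.symm k).2) w) ∘ Fin.castAdd _ = v₀ := funext fun i => by simp
      rwa [this]
    · rw [hO.holdsFor_trans]
      refine ⟨heqs, fun a ha => ?_⟩
      obtain ⟨u, hu, hrel⟩ := hatoms a ha
      have hwu : (fun i => w (Fin.ofNat (S.enc + 1) (a.2.2 i).enc)) = u := by
        funext i
        have hval : ((Fin.ofNat (S.enc + 1) (a.2.2 i).enc : Fin (S.enc + 1)) : ℕ) =
            (a.2.2 i).enc := Nat.mod_eq_of_lt (Nat.lt_succ_of_le (S.enc_arg_le ha i))
        obtain ⟨t, ht, htr⟩ := Classical.epsilon_spec (p := fun r =>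
          ∃ t : RTerm (γ ⊕ Unit) S.nvars,
            t.enc = (Fin.ofNat (S.enc + 1) (a.2.2 i).enc : Fin (S.enc + 1)) ∧
            extensionValue cI (β (σ i₀)) y t = algebraMap R Ω r) ⟨u i, _, hval.symm, hu i⟩
        rw [hval] at ht
        have e := RTerm.enc_injective ht
        exact FaithfulSMul.algebraMap_injective R Ω (htr.symm.trans (by rw [e]; exact hu i))
      refine ⟨fun i => ?_, ?_⟩
      · rw [hu i, ← hwu]
      · rwa [hwu]

end RowOps

theorem right_lt_pair {a : ℕ} (ha : 0 < a) (b : ℕ) : b < Nat.pair a b :=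
  (Nat.right_le_pair 0 b).trans_lt (Nat.pair_lt_pair_left b ha)

theorem Primrec.list_tuples {α : Type*} [Primcodable α] (n : ℕ) :
    Primrec (List.tuples n : List α → List (List α)) := by
  induction n with
  | zero => exact Primrec.const _
  | succ n ih =>
    exact Primrec.list_flatMap .id (Primrec.list_map (ih.comp .fst)
      (Primrec.list_cons.comp (Primrec.snd.comp .fst) .snd))

namespace TermOp

variable {γ : Type} [Encodable γ]

/-- The Gödel numbers of the row of values of a family of operations. -/
def rowCode {N : ℕ} (O : Fin N → TermOp γ) (L : List (List ℕ)) : List ℕ :=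
  List.ofFn fun i => (O i).code L

theorem rowCode_primrec {N : ℕ} (O : Fin N → TermOp γ) : Primrec (rowCode O) :=
  Primrec.list_ofFn fun i => (O i).code_primrec

theorem map_enc_row {N m : ℕ} (O : Fin N → TermOp γ) (L : List (List (RTerm γ m))) :
    (row O L).map RTerm.enc = rowCode O (L.map (List.map RTerm.enc)) := by
  simp [row, rowCode, List.map_ofFn, Function.comp_def, enc_op]

theorem map_code_primrec (F : List (TermOp γ)) :
    Primrec fun L : List (List ℕ) => F.map fun T => (T.code L, Nat.pair 2 0) := by
  induction F with
  | nil => exact .const _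
  | cons T F ih => exact Primrec.list_cons.comp (T.code_primrec.pair (.const _)) ih

end TermOp

/-- The Gödel number of the old relation symbol underlying a relation symbol of arity `n` of the
extended language, if any. -/
def oldSymbolCode (n r : ℕ) : Option ℕ :=
  if n = 1 then if r % 2 = 0 then some (r / 2) else none else some r

theorem oldSymbolCode_primrec : Primrec₂ oldSymbolCode :=
  Primrec.ite (Primrec.eq.comp .fst (.const 1))
    (Primrec.ite (Primrec.eq.comp (Primrec.nat_mod.comp .snd (.const 2)) (.const 0))
      (Primrec.option_some.comp (Primrec.nat_div.comp .snd (.const 2))) (.const none))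
    (Primrec.option_some.comp .snd)

theorem oldSymbolCode_encode {rels : ℕ → Type} [∀ n, Encodable (rels n)] {n : ℕ}
    (ρ : relsA rels n) :
    oldSymbolCode n (Encodable.encode ρ) = (oldSymbol ρ).map Encodable.encode := by
  match n, ρ with
  | 0, ρ => rfl
  | 1, Sum.inl ρ =>
    have h : Encodable.encode (show relsA rels 1 from Sum.inl ρ) = 2 * Encodable.encode ρ := rfl
    change oldSymbolCode 1 (Encodable.encode (show relsA rels 1 from Sum.inl ρ)) = _
    rw [h]
    simp [oldSymbolCode, oldSymbol]
  | 1, Sum.inr u =>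
    have h : Encodable.encode (show relsA rels 1 from Sum.inr u) = 2 * 0 + 1 := rfl
    change oldSymbolCode 1 (Encodable.encode (show relsA rels 1 from Sum.inr u)) = _
    rw [h]
    simp [oldSymbolCode, oldSymbol]
  | n + 2, ρ => rw [oldSymbolCode, if_neg (by omega)]; rfl

namespace RowOps

variable {γ : Type} [Encodable γ] {N : ℕ}

/-- The Gödel numbers of the row of a term with Gödel number `tbl.length`, given the table of
the rows of the terms with smaller Gödel numbers. -/
def transStep (O : RowOps γ N) (d m₀ : ℕ) (tbl : List (List ℕ)) : List ℕ :=
  let k := tbl.length.unpair.1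
  let x := tbl.length.unpair.2
  if k = 0 then
    TermOp.rowCode O.var [(List.range d).map fun j => Nat.pair 0 (m₀ + (j + d * x))]
  else if k = 1 then
    if x % 2 = 0 then TermOp.rowCode O.const [[Nat.pair 1 (x / 2)]] else TermOp.rowCode O.gen []
  else if k = 2 then TermOp.rowCode O.zero []
  else if k = 3 then TermOp.rowCode O.one []
  else if k = 4 then TermOp.rowCode O.add [tbl.getD x.unpair.1 [], tbl.getD x.unpair.2 []]
  else if k = 5 then TermOp.rowCode O.mul [tbl.getD x.unpair.1 [], tbl.getD x.unpair.2 []]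
  else TermOp.rowCode O.neg [tbl.getD x []]

/-- The table of the Gödel numbers of the rows of the terms with Gödel number less than `n`. -/
def transTable (O : RowOps γ N) (d m₀ : ℕ) : ℕ → List (List ℕ)
  | 0 => []
  | n + 1 => transTable O d m₀ n ++ [O.transStep d m₀ (transTable O d m₀ n)]

/-- The Gödel numbers of the row of the term with Gödel number `n`. -/
def transCode (O : RowOps γ N) (d m₀ n : ℕ) : List ℕ :=
  O.transStep d m₀ (O.transTable d m₀ n)

theorem transStep_primrec (O : RowOps γ N) (d m₀ : ℕ) : Primrec (O.transStep d m₀) := by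
  have hk : Primrec fun tbl : List (List ℕ) => tbl.length.unpair.1 :=
    Primrec.fst.comp (Primrec.unpair.comp Primrec.list_length)
  have hx : Primrec fun tbl : List (List ℕ) => tbl.length.unpair.2 :=
    Primrec.snd.comp (Primrec.unpair.comp Primrec.list_length)
  have hkc : ∀ c : ℕ, PrimrecPred fun tbl : List (List ℕ) => tbl.length.unpair.1 = c :=
    fun c => Primrec.eq.comp hk (.const c)
  have hget : ∀ {g : List (List ℕ) → ℕ}, Primrec g →
      Primrec fun tbl : List (List ℕ) => tbl.getD (g tbl) [] :=
    fun hg => (Primrec.list_getD _).comp .id hg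
  have hsing : ∀ {β : Type} [Primcodable β] {g : List (List ℕ) → β}, Primrec g →
      Primrec fun tbl => [g tbl] :=
    fun hg => Primrec.list_cons.comp hg (.const [])
  have htwo : Primrec fun tbl : List (List ℕ) =>
      [tbl.getD tbl.length.unpair.2.unpair.1 [], tbl.getD tbl.length.unpair.2.unpair.2 []] :=
    Primrec.list_cons.comp (hget (Primrec.fst.comp (Primrec.unpair.comp hx)))
      (hsing (hget (Primrec.snd.comp (Primrec.unpair.comp hx))))
  refine Primrec.ite (hkc 0) ((TermOp.rowCode_primrec O.var).comp (hsing ?_)) ?_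
  · refine Primrec.list_map (.const _) ?_
    exact Primrec₂.natPair.comp (.const 0) (Primrec.nat_add.comp (.const m₀)
      (Primrec.nat_add.comp .snd (Primrec.nat_mul.comp (.const d) (hx.comp .fst))))
  refine Primrec.ite (hkc 1) (Primrec.ite
    (Primrec.eq.comp (Primrec.nat_mod.comp hx (.const 2)) (.const 0))
    ((TermOp.rowCode_primrec O.const).comp (hsing (hsing (Primrec₂.natPair.comp (.const 1)
      (Primrec.nat_div.comp hx (.const 2)))))) (.const _)) ?_
  refine Primrec.ite (hkc 2) (.const _) (Primrec.ite (hkc 3) (.const _) ?_)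
  exact Primrec.ite (hkc 4) ((TermOp.rowCode_primrec O.add).comp htwo)
    (Primrec.ite (hkc 5) ((TermOp.rowCode_primrec O.mul).comp htwo)
      ((TermOp.rowCode_primrec O.neg).comp (hsing (hget hx))))

theorem transCode_primrec (O : RowOps γ N) (d m₀ : ℕ) : Primrec (O.transCode d m₀) := by
  refine (O.transStep_primrec d m₀).comp ?_
  refine (Primrec.nat_rec₁ (f := fun _ tbl => tbl ++ [O.transStep d m₀ tbl]) [] ?_).of_eq
    fun n => ?_
  · exact Primrec.list_concat.comp .snd ((O.transStep_primrec d m₀).comp .snd)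
  · induction n with
    | zero => rfl
    | succ n ih => simp only [transTable, ih]

theorem length_transTable (O : RowOps γ N) (d m₀ n : ℕ) : (O.transTable d m₀ n).length = n := by
  induction n with
  | zero => rfl
  | succ n ih => simp [transTable, ih]

theorem getD_transTable (O : RowOps γ N) (d m₀ : ℕ) {k n : ℕ} (h : k < n) :
    (O.transTable d m₀ n).getD k [] = O.transCode d m₀ k := by
  induction n with
  | zero => omega
  | succ n ih =>
    rw [transTable]
    rcases Nat.lt_succ_iff_lt_or_eq.1 h with h | rfl
    · rw [List.getD_append _ _ _ _ (by rwa [length_transTable]), ih h]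
    · rw [List.getD_append_right _ _ _ _ (length_transTable _ _ _ _).le, length_transTable]
      simp [transCode]

theorem map_enc_coeffVars (m₀ d W : ℕ) {m : ℕ} (k : Fin m) :
    (coeffVars (γ := γ) m₀ m d W k).map RTerm.enc =
      (List.range d).map fun j => Nat.pair 0 (m₀ + (j + d * k)) := by
  refine List.ext_getElem (by simp [coeffVars]) fun i _ _ => ?_
  simp [coeffVars, RTerm.enc]

theorem map_enc_transTerm (O : RowOps γ N) (d m₀ W : ℕ) {m : ℕ} (t : RTerm (γ ⊕ Unit) m) :
    (O.transTerm (coeffVars m₀ m d W) t).map RTerm.enc = O.transCode d m₀ t.enc := by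
  have htwo : ∀ k a b : ℕ, 0 < k → a < Nat.pair k (Nat.pair a b) ∧ b < Nat.pair k (Nat.pair a b) :=
    fun k a b hk => ⟨(Nat.left_le_pair a b).trans_lt (right_lt_pair hk _),
      (Nat.right_le_pair a b).trans_lt (right_lt_pair hk _)⟩
  induction t with
  | var k =>
    rw [transTerm, TermOp.map_enc_row, transCode]
    simp [transStep, length_transTable, RTerm.enc, map_enc_coeffVars]
  | const g =>
    rcases g with g | g
    · rw [transTerm, TermOp.map_enc_row, transCode]
      simp [transStep, length_transTable, RTerm.enc]
    · rw [transTerm, TermOp.map_enc_row, transCode]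
      simp [transStep, length_transTable, RTerm.enc]
  | zero =>
    rw [transTerm, TermOp.map_enc_row, transCode]
    simp [transStep, length_transTable, RTerm.enc]
  | one =>
    rw [transTerm, TermOp.map_enc_row, transCode]
    simp [transStep, length_transTable, RTerm.enc]
  | add s t hs ht =>
    have h := htwo 4 s.enc t.enc (by norm_num)
    rw [transTerm, TermOp.map_enc_row, transCode]
    simp only [List.map_cons, List.map_nil, hs, ht, transStep, length_transTable, RTerm.enc,
      Nat.unpair_pair, O.getD_transTable d m₀ h.1, O.getD_transTable d m₀ h.2]
    rfl
  | mul s t hs ht =>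
    have h := htwo 5 s.enc t.enc (by norm_num)
    rw [transTerm, TermOp.map_enc_row, transCode]
    simp only [List.map_cons, List.map_nil, hs, ht, transStep, length_transTable, RTerm.enc,
      Nat.unpair_pair, O.getD_transTable d m₀ h.1, O.getD_transTable d m₀ h.2]
    rfl
  | neg s hs =>
    have h : s.enc < Nat.pair 6 s.enc := right_lt_pair (by norm_num) _
    rw [transTerm, TermOp.map_enc_row, transCode]
    simp only [List.map_cons, List.map_nil, hs, transStep, length_transTable, RTerm.enc,
      Nat.unpair_pair, O.getD_transTable d m₀ h]
    rfl

end RowOps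

/-- The code of an atomic condition. -/
def encAtom {γ : Type} {rels : ℕ → Type} [Encodable γ] [∀ n, Encodable (rels n)] {m : ℕ}
    (a : Σ n : ℕ, rels n × (Fin n → RTerm γ m)) : ℕ × ℕ × List ℕ :=
  (a.1, Encodable.encode a.2.1, List.ofFn fun i => (a.2.2 i).enc)

/-- The list of codes of equations of a system with Gödel number `n`. -/
def eqsCode (n : ℕ) : List (ℕ × ℕ) := (Encodable.decode n.unpair.2.unpair.1).getD []

/-- The list of codes of atomic conditions of a system with Gödel number `n`. -/
def atomsCode (n : ℕ) : List (ℕ × ℕ × List ℕ) := (Encodable.decode n.unpair.2.unpair.2).getD []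

theorem eqsCode_primrec : Primrec eqsCode :=
  Primrec.option_getD.comp (Primrec.decode.comp (Primrec.fst.comp (Primrec.unpair.comp
    (Primrec.snd.comp Primrec.unpair)))) (.const [])

theorem atomsCode_primrec : Primrec atomsCode :=
  Primrec.option_getD.comp (Primrec.decode.comp (Primrec.snd.comp (Primrec.unpair.comp
    (Primrec.snd.comp Primrec.unpair)))) (.const [])

section

variable {γ : Type} {rels : ℕ → Type} [Encodable γ] [∀ n, Encodable (rels n)]

theorem eqsCode_enc (S : DSystem γ rels) :
    eqsCode S.enc = S.eqs.map fun e => (e.1.enc, e.2.enc) := by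
  simp [eqsCode, DSystem.enc]

theorem atomsCode_enc (S : DSystem γ rels) : atomsCode S.enc = S.atoms.map encAtom := by
  simp [atomsCode, DSystem.enc, encAtom]

theorem encAtom_renameAtom {m m' : ℕ} (f : Fin m → Fin m') (hf : ∀ i, (f i : ℕ) = i)
    (a : Σ n : ℕ, rels n × (Fin n → RTerm γ m)) : encAtom (renameAtom f a) = encAtom a := by
  simp only [encAtom, renameAtom, RTerm.enc_rename f hf]
  rfl

namespace RowOps

variable {N : ℕ}

/-- The Gödel number of the variable which stands for the argument with Gödel number `t` of an
atomic condition of the system with Gödel number `n`. -/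
def argCode (d m₀ n t : ℕ) : ℕ := Nat.pair 0 (m₀ + (n.unpair.1 * d + t % (n + 1)))

/-- The codes of the rows of the system with Gödel number `n`. -/
def condsCode (O : RowOps γ N) (d m₀ n : ℕ) : List (List ℕ) :=
  ((eqsCode n).map fun e =>
    TermOp.rowCode O.sub [O.transCode d m₀ e.1, O.transCode d m₀ e.2]) ++
  (atomsCode n).flatMap fun a => a.2.2.map fun t =>
    TermOp.rowCode O.arg [O.transCode d m₀ t, [argCode d m₀ n t]]

/-- The codes of the translated atomic conditions of the system with Gödel number `n`. -/
def transAtomsCode (d m₀ n : ℕ) : List (ℕ × ℕ × List ℕ) :=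
  (atomsCode n).filterMap fun a => (oldSymbolCode a.1 a.2.1).map fun r =>
    (a.1, r, a.2.2.map (argCode d m₀ n))

/-- The Gödel number of the Diophantine system over the base ring attached to the system with
Gödel number `n` over the extension ring. -/
def reduction (O : RowOps γ N) (F : List (TermOp γ)) (M d : ℕ) (φ : CondSystem γ rels) (n : ℕ) :
    ℕ :=
  Nat.pair (φ.nvars + (n.unpair.1 * d + (n + 1))) (Nat.pair
    (Encodable.encode
      ((List.tuples M (φ.conds.map (List.map RTerm.enc) ++ O.condsCode d φ.nvars n)).flatMap
        fun L => F.map fun T => (T.code L, Nat.pair 2 0)))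
    (Encodable.encode (φ.atoms.map encAtom ++ transAtomsCode d φ.nvars n)))

theorem argCode_primrec (d m₀ : ℕ) : Primrec₂ (argCode d m₀) :=
  Primrec₂.natPair.comp (.const 0) (Primrec.nat_add.comp (.const m₀) (Primrec.nat_add.comp
    (Primrec.nat_mul.comp (Primrec.fst.comp (Primrec.unpair.comp .fst)) (.const d))
    (Primrec.nat_mod.comp .snd (Primrec.succ.comp .fst))))

theorem condsCode_primrec (O : RowOps γ N) (d m₀ : ℕ) : Primrec (O.condsCode d m₀) := by
  have h := O.transCode_primrec d m₀
  refine Primrec.list_append.comp (Primrec.list_map eqsCode_primrec ?_)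
    (Primrec.list_flatMap atomsCode_primrec (Primrec.list_map
      (Primrec.snd.comp (Primrec.snd.comp .snd)) ?_))
  · exact (TermOp.rowCode_primrec O.sub).comp (Primrec.list_cons.comp
      (h.comp (Primrec.fst.comp .snd)) (Primrec.list_cons.comp
        (h.comp (Primrec.snd.comp .snd)) (.const [])))
  · exact (TermOp.rowCode_primrec O.arg).comp (Primrec.list_cons.comp (h.comp .snd)
      (Primrec.list_cons.comp (Primrec.list_cons.comp
        ((argCode_primrec d m₀).comp (Primrec.fst.comp .fst) .snd) (.const [])) (.const [])))

theorem transAtomsCode_primrec (d m₀ : ℕ) : Primrec (transAtomsCode d m₀) := by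
  refine Primrec.listFilterMap atomsCode_primrec (Primrec.option_map
    (oldSymbolCode_primrec.comp (Primrec.fst.comp .snd)
      (Primrec.fst.comp (Primrec.snd.comp .snd))) ?_)
  refine Primrec.pair (Primrec.fst.comp (Primrec.snd.comp .fst)) (Primrec.pair .snd ?_)
  exact Primrec.list_map (Primrec.snd.comp (Primrec.snd.comp (Primrec.snd.comp .fst)))
    ((argCode_primrec d m₀).comp (Primrec.fst.comp (Primrec.fst.comp .fst)) .snd)

theorem reduction_primrec (O : RowOps γ N) (F : List (TermOp γ)) (M d : ℕ)
    (φ : CondSystem γ rels) : Primrec (O.reduction F M d φ) := by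
  refine Primrec₂.natPair.comp ?_ (Primrec₂.natPair.comp
    (Primrec.encode.comp (Primrec.list_flatMap ((Primrec.list_tuples M).comp
      (Primrec.list_append.comp (.const _) (O.condsCode_primrec d φ.nvars)))
      ((TermOp.map_code_primrec F).comp .snd)))
    (Primrec.encode.comp (Primrec.list_append.comp (.const _)
      (transAtomsCode_primrec d φ.nvars))))
  exact Primrec.nat_add.comp (.const _) (Primrec.nat_add.comp
    (Primrec.nat_mul.comp (Primrec.fst.comp Primrec.unpair) (.const d)) Primrec.succ)

theorem enc_argVar (d m₀ t : ℕ) (S : DSystem (γ ⊕ Unit) (relsA rels)) :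
    (argVar (γ := γ) m₀ S.nvars d S.enc t).enc = argCode d m₀ S.enc t := by
  have hn : S.enc.unpair.1 = S.nvars := by simp [DSystem.enc]
  rw [argCode, hn]
  rfl

theorem map_enc_transConds (O : RowOps γ N) (d m₀ : ℕ) (S : DSystem (γ ⊕ Unit) (relsA rels)) :
    (O.transConds d m₀ S.enc S).map (List.map RTerm.enc) = O.condsCode d m₀ S.enc := by
  simp only [transConds, condsCode, eqsCode_enc, atomsCode_enc, List.map_append, List.map_map,
    List.map_flatMap, List.flatMap_map, encAtom, List.map_ofFn, Function.comp_def,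
    TermOp.map_enc_row, List.map_cons, List.map_nil, map_enc_transTerm, enc_argVar]

theorem map_encAtom_transAtoms (d m₀ : ℕ) (S : DSystem (γ ⊕ Unit) (relsA rels)) :
    (transAtoms d m₀ S.enc S).map encAtom = transAtomsCode d m₀ S.enc := by
  simp only [transAtoms, transAtomsCode, atomsCode_enc, List.map_filterMap, List.filterMap_map,
    encAtom, Function.comp_def, oldSymbolCode_encode, Option.map_map, enc_argVar, List.map_ofFn]

theorem reduction_enc (O : RowOps γ N) (F : List (TermOp γ)) (M d : ℕ) (φ : CondSystem γ rels)
    (S : DSystem (γ ⊕ Unit) (relsA rels)) :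
    O.reduction F M d φ S.enc = ((O.translate d φ S).eliminate F M).enc := by
  have hn : S.enc.unpair.1 = S.nvars := by simp [DSystem.enc]
  have hc : (O.translate d φ S).conds.map (List.map RTerm.enc) =
      φ.conds.map (List.map RTerm.enc) ++ O.condsCode d φ.nvars S.enc := by
    rw [translate, List.map_append, map_enc_transConds]
    congr 1
    simp only [List.map_map]
    refine List.map_congr_left fun c _ => ?_
    simp only [Function.comp_def, List.map_map]
    exact List.map_congr_left fun t _ => RTerm.enc_rename (Fin.castAdd _) (fun _ => rfl) t
  have ha : (O.translate d φ S).atoms.map encAtom =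
      φ.atoms.map encAtom ++ transAtomsCode d φ.nvars S.enc := by
    rw [translate, List.map_append, map_encAtom_transAtoms]
    congr 1
    rw [List.map_map]
    exact List.map_congr_left fun a _ => encAtom_renameAtom (Fin.castAdd _) (fun _ => rfl) a
  have he : ((O.translate d φ S).eliminate F M).eqs.map (fun e => (e.1.enc, e.2.enc)) =
      (List.tuples M (φ.conds.map (List.map RTerm.enc) ++ O.condsCode d φ.nvars S.enc)).flatMap
        fun L => F.map fun T => (T.code L, Nat.pair 2 0) := by
    rw [← hc, List.tuples_map, List.flatMap_map]
    simp only [CondSystem.eliminate, CondSystem.eliminationEqs, List.map_flatMap, List.map_map,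
      Function.comp_def, TermOp.enc_op, RTerm.enc]
  rw [reduction, hn, ← he, ← ha]
  rfl

end RowOps

end

theorem exists_reduction {γ : Type} {rels : ℕ → Type} [Encodable γ] [∀ n, Encodable (rels n)]
    {R : Type*} [CommRing R] (cI : γ → R) (relI : ∀ n, rels n → (Fin n → R) → Prop)
    {Ω : Type*} [Field Ω] [Algebra R Ω] [FaithfulSMul R Ω] {d : ℕ} {β : Fin d → Ω} (i₀ : Fin d)
    {p : Polynomial (Subring.closure (Set.range cI))} (hmonic : p.Monic)
    (hp : p.map (algebraMap _ Ω) = ∏ i, (Polynomial.X - Polynomial.C (β i))) :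
    ∃ f : ℕ → ℕ, Primrec f ∧ ∀ S : DSystem (γ ⊕ Unit) (relsA rels),
      ∃ T : DSystem γ rels, T.enc = f S.enc ∧
        (T.Solvable cI relI ↔ RowOps.ExtensionHolds cI relI d (β i₀) S) := by
  obtain ⟨N, ε, hε⟩ := exists_uniform_spanning hmonic hp
  replace hε : UniformlySpans cI β ε := hε
  obtain ⟨O, hO⟩ := hε.exists_rowOps i₀
  obtain ⟨F, hF⟩ := exists_elimination_termOps (ε := ε) hp (Fintype.card (Equiv.Perm (Fin d)))
  obtain ⟨_, ⟨φ, rfl⟩, hφ⟩ := exists_one_mem_iff_inter_nonempty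
    (Set.range fun φ : CondSystem γ rels => {σ | φ.HoldsAt cI relI β ε σ})
    ⟨CondSystem.empty, Set.eq_univ_of_forall CondSystem.empty_holdsAt⟩
    (by
      rintro _ ⟨φ, rfl⟩ _ ⟨ψ, rfl⟩
      exact ⟨φ.conj ψ, Set.ext fun _ => CondSystem.conj_holdsAt⟩)
    (by
      rintro _ ⟨φ, rfl⟩ τ
      obtain ⟨Q, hQ⟩ := hε.exists_translation (γ := γ) τ
      exact ⟨φ.mapConds Q, Set.ext fun _ => CondSystem.mapConds_holdsAt hQ⟩)
  refine ⟨_, O.reduction_primrec F (Fintype.card (Equiv.Perm (Fin d))) d φ, fun S =>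
    ⟨_, (O.reduction_enc F _ d φ S).symm, ?_⟩⟩
  rw [CondSystem.eliminate_solvable hF]
  have h := hφ {σ | RowOps.ExtensionHolds cI relI d (β (σ i₀)) S}
    ⟨O.translate d CondSystem.empty S, Set.ext fun σ => (hO.translate_holdsAt _ S σ).trans
      (and_iff_right (CondSystem.empty_holdsAt σ))⟩
  exact (exists_congr fun σ => hO.translate_holdsAt φ S σ).trans h.symm

theorem RTerm.map_eval {γ : Type} {T T' : Type*} [Ring T] [Ring T'] (f : T →+* T') (cI : γ → T)
    {m : ℕ} (v : Fin m → T) (t : RTerm γ m) :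
    f (t.eval cI v) = t.eval (fun g => f (cI g)) fun k => f (v k) := by
  induction t <;> simp_all [RTerm.eval]

section Adjoin

open Polynomial

variable {A : Type*} [CommRing A] {R : Subring A} {α : A}

theorem exists_aeval_eq_of_mem_closure {x : A} (hx : x ∈ Subring.closure ((R : Set A) ∪ {α})) :
    ∃ q : R[X], aeval α q = x := by
  change x ∈ (aeval α : R[X] →ₐ[R] A).toRingHom.range
  refine (Subring.closure_le.2 ?_) hx
  rintro y (hy | rfl)
  · exact ⟨C ⟨y, hy⟩, aeval_C α _⟩
  · exact ⟨X, aeval_X y⟩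

theorem sum_mul_pow_mem_closure {d : ℕ} (y : Fin d → R) :
    ∑ j, (y j : A) * α ^ (j : ℕ) ∈ Subring.closure ((R : Set A) ∪ {α}) :=
  sum_mem fun j _ => mul_mem (Subring.subset_closure (.inl (y j).2))
    (pow_mem (Subring.subset_closure (.inr rfl)) _)

theorem exists_eq_sum_mul_pow [Nontrivial A] {p : R[X]} (hp : p.Monic) (hα : aeval α p = 0)
    {x : A} (hx : x ∈ Subring.closure ((R : Set A) ∪ {α})) :
    ∃ y : Fin p.natDegree → R, x = ∑ j, (y j : A) * α ^ (j : ℕ) := by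
  obtain ⟨q, rfl⟩ := exists_aeval_eq_of_mem_closure hx
  have hp1 : p ≠ 1 := by
    rintro rfl
    simp at hα
  refine ⟨fun j => (q %ₘ p).coeff j, ?_⟩
  rw [← aeval_modByMonic_eq_self_of_root hα,
    aeval_eq_sum_range' (natDegree_modByMonic_lt q hp hp1), Finset.sum_range]
  rfl

theorem solvable_iff_extensionHolds {γ : Type} {rels : ℕ → Type} [Nontrivial A] (cI : γ → R)
    (relI : ∀ n, rels n → (Fin n → R) → Prop) {Ω : Type*} [Field Ω] [Algebra A Ω]
    [FaithfulSMul A Ω] {p : R[X]} (hp : p.Monic) (hα : aeval α p = 0)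
    (S : DSystem (γ ⊕ Unit) (relsA rels)) :
    S.Solvable (cIA R α cI) (relIA R α relI) ↔
      RowOps.ExtensionHolds cI relI p.natDegree (algebraMap A Ω α) S := by
  let B := Subring.closure ((R : Set A) ∪ {α})
  have hinj := FaithfulSMul.algebraMap_injective A Ω
  let point : (Fin S.nvars → Fin p.natDegree → R) → Fin S.nvars → B :=
    fun y k => ⟨_, sum_mul_pow_mem_closure (y k)⟩
  have hpoint : Function.Surjective point := by
    intro v
    choose y hy using fun k => exists_eq_sum_mul_pow hp hα (v k).2
    exact ⟨y, funext fun k => Subtype.ext (hy k).symm⟩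
  have hval : ∀ y t, RowOps.extensionValue cI (algebraMap A Ω α) y t =
      algebraMap A Ω ((t.eval (cIA R α cI) (point y) : B) : A) := by
    intro y t
    refine Eq.trans ?_ (RTerm.map_eval ((algebraMap A Ω).comp B.subtype) _ _ t).symm
    unfold RowOps.extensionValue
    congr 1
    · funext g
      rcases g with g | g <;> rfl
    · funext k
      simp only [point, RingHom.comp_apply, Subring.subtype_apply, map_sum, map_mul, map_pow]
      rfl
  unfold DSystem.Solvable RowOps.ExtensionHolds
  rw [hpoint.exists]
  refine exists_congr fun y => and_congr (forall₂_congr fun e _ => ?_)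
    (forall₂_congr fun a _ => ?_)
  · rw [hval, hval, hinj.eq_iff, Subtype.coe_inj]
  · rw [relIA_iff]
    refine exists_congr fun w => and_congr_left fun _ => forall_congr' fun i => ?_
    rw [hval, eq_comm]
    exact hinj.eq_iff.symm

end Adjoin

/-- Let `R` be an integral domain (a subring of a domain `A`), considered with a language
extending the language of rings by constants `γ` and relations `rels`, and suppose
Hilbert's tenth problem over `(R, L)` has a positive answer.  Let `α ∈ A` be integral
over `R`, with a monic polynomial relation whose coefficients lie in the subring generated
by the (Diophantine) constants.  Then Hilbert's tenth problem over `R[α]`, in the language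
augmented by a constant for `α` and a unary predicate for membership in `R`, also has a
positive answer. -/
theorem stmt17 {A : Type*} [CommRing A] [IsDomain A]
    (γ : Type) (rels : ℕ → Type) [Encodable γ] [∀ n, Encodable (rels n)]
    (R : Subring A) (cI : γ → R) (relI : ∀ n, rels n → (Fin n → R) → Prop)
    (α : A) (P : Polynomial A) (hPmonic : P.Monic) (hPα : P.eval α = 0)
    (hPcoeff : ∀ i, P.coeff i ∈ Subring.closure (Set.range fun g => (cI g : A)))
    (hdec : HTPPos (↥R) cI relI) :
    HTPPos (↥(Subring.closure ((R : Set A) ∪ {α}))) (cIA R α cI) (relIA R α relI) := by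
  let Ω := AlgebraicClosure (FractionRing A)
  let R₀ := Subring.closure (Set.range cI)
  have hinj : Function.Injective (algebraMap A Ω) :=
    (algebraMap (FractionRing A) Ω).injective.comp (IsFractionRing.injective A (FractionRing A))
  have : FaithfulSMul A Ω := (faithfulSMul_iff_algebraMap_injective A Ω).2 hinj
  have : FaithfulSMul R Ω := (faithfulSMul_iff_algebraMap_injective R Ω).2
    (hinj.comp Subtype.val_injective)
  have hlift : P ∈ Polynomial.lifts (algebraMap R₀ A) := by
    refine (Polynomial.lifts_iff_coeff_lifts P).2 fun i => ?_
    have himage : (Set.range fun g => (cI g : A)) = R.subtype '' Set.range cI := by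
      rw [← Set.range_comp]
      rfl
    have h := hPcoeff i
    rw [himage, ← RingHom.map_closure] at h
    obtain ⟨a, ha, hai⟩ := h
    exact ⟨⟨a, ha⟩, hai⟩
  obtain ⟨p, hpP, -, hpmonic⟩ := Polynomial.lifts_and_natDegree_eq_and_monic hlift hPmonic
  have hpΩ : p.map (algebraMap R₀ Ω) = P.map (algebraMap A Ω) := by
    rw [← hpP, Polynomial.map_map]
    rfl
  let l := (P.map (algebraMap A Ω)).roots.toList
  have hp : p.map (algebraMap R₀ Ω) =
      ∏ i : Fin l.length, (Polynomial.X - Polynomial.C l[(i : ℕ)]) := by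
    rw [Fin.prod_univ_fun_getElem l fun a => Polynomial.X - Polynomial.C a,
      ← Multiset.prod_coe, ← Multiset.map_coe, Multiset.coe_toList, hpΩ]
    exact (IsAlgClosed.splits _).eq_prod_roots_of_monic (hPmonic.map _)
  have hroot : algebraMap A Ω α ∈ l := by
    rw [Multiset.mem_toList, Polynomial.mem_roots (hPmonic.map _).ne_zero,
      Polynomial.IsRoot.def, Polynomial.eval_map_apply, hPα, map_zero]
  obtain ⟨i₀, hi₀⟩ := List.mem_iff_get.1 hroot
  let q : Polynomial R := p.map (algebraMap R₀ R)
  have hq : q.Monic := hpmonic.map _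
  have hqα : Polynomial.aeval α q = 0 := by
    have hqP : q.map (algebraMap R A) = P := by
      rw [← hpP, Polynomial.map_map]
      rfl
    rw [← Polynomial.eval_map_algebraMap, hqP, hPα]
  have hdeg : q.natDegree = l.length := by
    rw [hpmonic.natDegree_map, ← hpmonic.natDegree_map (algebraMap R₀ Ω), hp,
      Polynomial.natDegree_finsetProd_X_sub_C_eq_card, Finset.card_univ, Fintype.card_fin]
  obtain ⟨f, hf, hred⟩ := exists_reduction cI relI i₀ hpmonic hp
  obtain ⟨dec, hcomp, hspec⟩ := hdec
  refine ⟨fun n => dec (f n), hcomp.comp hf.to_comp, fun S => ?_⟩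
  obtain ⟨T, hT, hTS⟩ := hred S
  rw [solvable_iff_extensionHolds (Ω := Ω) cI relI hq hqα, hdeg]
  change _ ↔ dec (f S.enc) = true
  rw [← hT, ← hspec, hTS, ← hi₀]
  rfl
end
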